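/- Let k be a field, R a Dedekind domain containing k, and A an R-algebra. Suppose L is a finite separable field extension of k such that A ⊗_k L is isomorphic as an (R ⊗_k L)-algebra to a polynomial ring in two variables over R ⊗_k L. Then for every prime ideal p of R, the fiber A ⊗_R κ(p) is isomorphic as a κ(p)-algebra to a polynomial ring in two variables over κ(p); consequently A is an 𝔸²-fibration over R. -/

import Mathlib

/-!
The statement reduces to the theorem of Kambayashi that an algebra `B` over a field `K` which becomes
a polynomial ring in two variables over a finite Galois extension `K'` is already a polynomial ring
in two variables (`A2Form.nonempty_algEquiv_of_galois`). For a prime `p`, take `K = κ(p)`,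
`B = κ(p) ⊗ A`, and for `K'` the splitting field over `κ(p)` of the minimal polynomial of a primitive
element of `L / k`; since `R ⊗ L` maps to `K'`, the hypothesis gives `K' ⊗ B ≅ K'[X₀, X₁]`. Finite
generation and flatness of `A` descend along the free extension `R → R ⊗ L`.

Kambayashi's theorem is proved with coordinate systems, the isomorphisms `K' ⊗ B ≅ K'[X₀, X₁]`, on
which the Galois group acts. Fix one variable and call a system minimal if the sum of the
degrees of the conjugates of this variable is least. Conjugates of minimal systems are minimal, and
all minimal systems have a common element of degree one (`A2Form.exists_common_all`). Hence the space
of elements of degree at most one in all minimal systems is Galois-stable and does not consist of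
constants, and Galois descent yields a variable `b₁` in `B`. An automorphism fixing the variable
`X₁` is triangular, so the space of elements `a X₀ + p(X₁)` is also Galois-stable, and a second
descent yields `b₀` in `B` with `(b₀, b₁)` a coordinate system. The map `K[X₀, X₁] → B` defined by
`b₀, b₁` is bijective after base change to `K'`, hence bijective.

The existence of the common element is a convexity argument on degrees, the combinatorial content of
the tree attached to the automorphism group of the plane. It needs two facts about a plane
automorphism in arbitrary characteristic: the leading form of a coordinate contains a pure power of
one of the variables (`A2Form.exists_pure_power`), and if both components have degree at least two,
then the leading form of larger degree is a multiple of a power of the other one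
(`A2Form.exists_reduction`). Both come from degenerating the additive group action that fixes one
coordinate and translates the other one: for every weight, this gives a nontrivial deformation of
the identity fixing the weighted leading form of the coordinate, and hence all its factors. Such a
deformation cannot fix both variables, nor a binomial `X₁ ^ b - c X₀ ^ a` with `a, b ≥ 2` coprime,
since all polynomial curves on its generic level curve are constant (`A2Form.curve_const`).
-/

set_option synthInstance.maxHeartbeats 1000000
set_option maxHeartbeats 1000000

open TensorProduct

/-- The residue field `κ(p)` of a commutative ring at a prime ideal `p`. -/
noncomputable abbrev ResidueFieldAt {R : Type*} [CommRing R] (p : Ideal R) [p.IsPrime] :=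
  IsLocalRing.ResidueField (Localization.AtPrime p)

/-- `A` is an `𝔸²`-fibration over `R`: a finitely generated flat `R`-algebra all of whose
fibers `A ⊗_R κ(p)` are polynomial rings in two variables over `κ(p)`. -/
def IsA2Fibration (R A : Type*) [CommRing R] [CommRing A] [Algebra R A] : Prop :=
  Algebra.FiniteType R A ∧ Module.Flat R A ∧
  ∀ (p : Ideal R) [p.IsPrime],
    Nonempty ((ResidueFieldAt p ⊗[R] A) ≃ₐ[ResidueFieldAt p]
      MvPolynomial (Fin 2) (ResidueFieldAt p))

namespace A2Form

/-! ### Polynomial curves on `V ^ a = c U ^ b + const` -/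

section Curves

open Polynomial in
/-- Over a field in which `a` and `b` are nonzero, differentiating `U ^ b - c V ^ a = P` shows that
`U ^ (b - 1)` divides `V'` and `V ^ (a - 1)` divides `U'`, because `U` and `V` are coprime; comparing
degrees makes `U` constant. If the derivatives vanish, `U` and `V` are polynomials in `X ^ p` and the
degree drops. -/
lemma curve_const_of_ne_zero {L : Type*} [Field L] {a b : ℕ} (ha : 2 ≤ a) (hb : 2 ≤ b)
    (ha' : (a : L) ≠ 0) (hb' : (b : L) ≠ 0) {c P : L} (hc : c ≠ 0) (hP : P ≠ 0) :
    ∀ (n : ℕ) (U V : L[X]), U.natDegree ≤ n → U ^ b - C c * V ^ a = C P →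
      U.natDegree = 0 := by
  intro n
  induction n using Nat.strong_induction_on with
  | _ n ih =>
  intro U V hn h
  by_contra hU
  obtain ⟨b, rfl⟩ : ∃ b', b = b' + 1 := ⟨b - 1, by omega⟩
  obtain ⟨a, rfl⟩ : ∃ a', a = a' + 1 := ⟨a - 1, by omega⟩
  have hder := congrArg derivative h
  simp only [derivative_sub, derivative_mul, derivative_C, derivative_pow, zero_mul, zero_add,
    Nat.add_sub_cancel, sub_eq_zero] at hder
  have hU0 : U ≠ 0 := by rintro rfl; simp at hU
  have hCb : (C ((b + 1 : ℕ) : L)) ≠ 0 := C_ne_zero.2 hb'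
  have hCa : (C ((a + 1 : ℕ) : L)) ≠ 0 := C_ne_zero.2 ha'
  have hCc : (C c) ≠ 0 := by simpa using hc
  by_cases hV' : derivative V = 0
  · have hU' : derivative U = 0 := by
      rw [hV'] at hder
      rw [mul_zero, mul_zero] at hder
      exact (mul_eq_zero.1 hder).resolve_left (mul_ne_zero hCb (pow_ne_zero b hU0))
    rcases CharP.exists L with ⟨p, hp⟩
    rcases CharP.char_is_prime_or_zero L p with hpp | rfl
    · have : NeZero p := ⟨hpp.ne_zero⟩
      rw [← expand_contract p hU' hpp.ne_zero, ← expand_contract p hV' hpp.ne_zero] at h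
      have h1 : expand L p (contract p U ^ (b + 1) - C c * contract p V ^ (a + 1)) =
          expand L p (C P) := by
        simpa using h
      have h2 := expand_injective hpp.pos h1
      have hdeg : (contract p U).natDegree * p = U.natDegree := by
        conv_rhs => rw [← expand_contract p hU' hpp.ne_zero]
        rw [natDegree_expand]
      have h3 := ih (contract p U).natDegree (by
        have := hpp.two_le
        nlinarith [Nat.pos_of_ne_zero hU, Nat.pos_of_ne_zero (n := (contract p U).natDegree)
          (by intro h0; rw [h0] at hdeg; omega)]) _ _ le_rfl h2
      rw [h3] at hdeg
      omega
    · have := CharP.charP_to_charZero L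
      exact hU ((derivative_eq_zero.1 hU'))
  · have hV0 : V ≠ 0 := by rintro rfl; simp at hV'
    have hcop : IsCoprime U V := by
      refine ⟨C P⁻¹ * U ^ b, - C P⁻¹ * (C c * V ^ a), ?_⟩
      have : C P⁻¹ * (U ^ (b + 1) - C c * V ^ (a + 1)) = 1 := by
        rw [h, ← C_mul, inv_mul_cancel₀ hP, C_1]
      rw [← this]
      ring
    have hU' : derivative U ≠ 0 := by
      intro h0
      rw [h0, mul_zero] at hder
      exact (mul_ne_zero hCc (mul_ne_zero (mul_ne_zero hCa (pow_ne_zero a hV0)) hV')) hder.symm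
    have d1 : U ^ b ∣ derivative V := by
      have : U ^ b ∣ (C c * C ((a + 1 : ℕ) : L)) * (V ^ a * derivative V) :=
        ⟨C ((b + 1 : ℕ) : L) * derivative U, by linear_combination -hder⟩
      have hu : IsUnit (C c * C ((a + 1 : ℕ) : L)) := by
        rw [← C_mul]; exact isUnit_C.2 (isUnit_iff_ne_zero.2 (mul_ne_zero hc ha'))
      exact (hcop.pow).dvd_of_dvd_mul_left ((hu.dvd_mul_left).1 this)
    have d2 : V ^ a ∣ derivative U := by
      have : V ^ a ∣ (C ((b + 1 : ℕ) : L)) * (U ^ b * derivative U) :=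
        ⟨C c * C ((a + 1 : ℕ) : L) * derivative V, by linear_combination hder⟩
      have hu : IsUnit (C ((b + 1 : ℕ) : L)) := isUnit_C.2 (isUnit_iff_ne_zero.2 hb')
      exact (hcop.symm.pow).dvd_of_dvd_mul_left ((hu.dvd_mul_left).1 this)
    have e1 := natDegree_le_of_dvd d1 hV'
    have e2 := natDegree_le_of_dvd d2 hU'
    rw [natDegree_pow] at e1 e2
    have hVd : V.natDegree ≠ 0 := by
      intro h0
      rw [eq_C_of_natDegree_eq_zero h0] at hV'
      simp at hV'
    have f1 := natDegree_derivative_lt hVd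
    have f2 := natDegree_derivative_lt hU
    nlinarith

open Polynomial in
/-- When `a = 0` in `S`, differentiating the coefficients along a derivation with `D x = 1` kills the
term `V ^ a`, and leaves `b U ^ (b - 1) D(U) = b x ^ (b - 1)`, so that `U` is constant. -/
lemma curve_const_of_eq_zero {S : Type*} [CommRing S] [IsDomain S] (D : Derivation ℤ S S)
    {x y c : S} (hx : D x = 1) (hc : D c = 0) (hx0 : x ≠ 0) {a b : ℕ} (ha : (a : S) = 0)
    (hb : (b : S) ≠ 0) (hb2 : 2 ≤ b) (U V : S[X]) (h : U ^ b - C c * V ^ a = C (x ^ b - c * y ^ a)) :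
    U.natDegree = 0 := by
  let _ : Differential S := ⟨D⟩
  have hC : ∀ s, Differential.mapCoeffs (C s : S[X]) = C (D s) := fun s => by
    rw [Differential.mapCoeffs_C]; rfl
  have hV : Differential.mapCoeffs (V ^ a) = 0 := by
    rw [Derivation.leibniz_pow, ← Nat.cast_smul_eq_nsmul S a, ha, zero_smul]
  have hy : D (y ^ a) = 0 := by
    rw [Derivation.leibniz_pow, ← Nat.cast_smul_eq_nsmul S a, ha, zero_smul]
  have h1 := congrArg (Differential.mapCoeffs (A := S)) h
  rw [map_sub, Derivation.leibniz, hV, hC, hc, hC, map_sub, Derivation.leibniz D c, hy, hc] at h1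
  simp only [map_zero, smul_zero, add_zero, sub_zero, Derivation.leibniz_pow, hx] at h1
  have h2 : C (b : S) * (U ^ (b - 1) * Differential.mapCoeffs U) = C ((b : S) * x ^ (b - 1)) := by
    simpa using h1
  have hne : C ((b : S) * x ^ (b - 1)) ≠ 0 := C_ne_zero.2 (mul_ne_zero hb (pow_ne_zero _ hx0))
  have hn := congrArg natDegree h2
  rw [← h2] at hne
  have n1 := right_ne_zero_of_mul hne
  rw [natDegree_mul (left_ne_zero_of_mul hne) n1,
    natDegree_mul (left_ne_zero_of_mul n1) (right_ne_zero_of_mul n1), natDegree_C, natDegree_C,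
    natDegree_pow] at hn
  have : (b - 1) * U.natDegree = 0 := by omega
  rcases Nat.mul_eq_zero.1 this with h3 | h3
  · omega
  · exact h3

open MvPolynomial in
lemma curve_const_left {F : Type*} [Field F] {i j : Fin 2} (hij : i ≠ j) {a b : ℕ} (ha : 2 ≤ a)
    (hb : 2 ≤ b) (hb' : (b : F) ≠ 0) {c : F} (hc : c ≠ 0)
    (U V : Polynomial (MvPolynomial (Fin 2) F))
    (h : U ^ b - Polynomial.C (C c) * V ^ a = Polynomial.C (X i ^ b - C c * X j ^ a)) :
    U.natDegree = 0 := by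
  have hcast : ∀ n : ℕ, (n : MvPolynomial (Fin 2) F) = C (n : F) := fun n => by simp
  by_cases ha' : (a : F) = 0
  · refine curve_const_of_eq_zero ((pderiv i).restrictScalars ℤ) (x := X i) (y := X j) (c := C c)
      ?_ ?_ (X_ne_zero i) ?_ ?_ hb U V h
    · simp
    · simp
    · rw [hcast, ha', C_0]
    · rw [hcast]; exact C_ne_zero.2 hb'
  · let ι := algebraMap (MvPolynomial (Fin 2) F) (FractionRing (MvPolynomial (Fin 2) F))
    have hι : Function.Injective ι := IsFractionRing.injective _ _
    have hn : ∀ n : ℕ, (n : F) ≠ 0 → (n : FractionRing (MvPolynomial (Fin 2) F)) ≠ 0 := by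
      intro n hn h0
      apply hn
      rw [← map_natCast ι, hcast, map_eq_zero_iff ι hι] at h0
      exact C_eq_zero.1 h0
    have h1 := congrArg (Polynomial.map ι) h
    simp only [Polynomial.map_sub, Polynomial.map_mul, Polynomial.map_pow, Polynomial.map_C] at h1
    have hP : (X i ^ b - C c * X j ^ a : MvPolynomial (Fin 2) F) ≠ 0 := by
      intro h0
      have := congrArg (eval (Function.update (fun _ => 0) i 1)) h0
      simp [hij.symm, show a ≠ 0 by omega] at this
    have := curve_const_of_ne_zero ha hb (hn a ha') (hn b hb')
      (c := ι (C c)) (by rw [map_ne_zero_iff ι hι]; simpa using hc)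
      (by rwa [map_ne_zero_iff ι hι]) _ (U.map ι) (V.map ι) le_rfl h1
    rwa [Polynomial.natDegree_map_eq_of_injective hι] at this

open MvPolynomial in
/-- A polynomial family of points on the curve through the generic point of the plane, of equation
`U ^ b - c V ^ a = const` with `a, b ≥ 2` coprime, is constant. As `a` and `b` are not both zero
in `F`, the roles of `U` and `V` can be exchanged to reach the case `b ≠ 0`. -/
lemma curve_const {F : Type*} [Field F] {i j : Fin 2} (hij : i ≠ j) {a b : ℕ} (ha : 2 ≤ a)
    (hb : 2 ≤ b) (hab : Nat.Coprime a b) {c : F} (hc : c ≠ 0)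
    (U V : Polynomial (MvPolynomial (Fin 2) F))
    (h : U ^ b - Polynomial.C (C c) * V ^ a = Polynomial.C (X i ^ b - C c * X j ^ a)) :
    U.natDegree = 0 ∧ V.natDegree = 0 := by
  have key : ∀ {i j : Fin 2} (_ : i ≠ j) {a b : ℕ} (_ : 2 ≤ a) (_ : 2 ≤ b) (_ : (b : F) ≠ 0) {c : F}
      (_ : c ≠ 0) (U V : Polynomial (MvPolynomial (Fin 2) F))
      (_ : U ^ b - Polynomial.C (C c) * V ^ a = Polynomial.C (X i ^ b - C c * X j ^ a)),
      U.natDegree = 0 ∧ V.natDegree = 0 := by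
    intro i j hij a b ha hb hb' c hc U V h
    have hU := curve_const_left hij ha hb hb' hc U V h
    refine ⟨hU, ?_⟩
    have h1 : Polynomial.C (C c) * V ^ a = U ^ b - Polynomial.C (X i ^ b - C c * X j ^ a) := by
      rw [← h]; ring
    have h2 := congrArg Polynomial.natDegree h1
    rw [Polynomial.eq_C_of_natDegree_eq_zero hU, ← Polynomial.C_pow, ← Polynomial.C_sub,
      Polynomial.natDegree_C, Polynomial.natDegree_C_mul (by simpa using hc),
      Polynomial.natDegree_pow] at h2
    rcases Nat.mul_eq_zero.1 h2 with h3 | h3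
    · omega
    · exact h3
  by_cases hb' : (b : F) = 0
  · have ha' : (a : F) ≠ 0 := by
      intro ha'
      have h1 : ((Nat.gcd a b : ℕ) : F) = 0 := by
        have : ((Nat.gcd a b : ℕ) : ℤ) = a * Nat.gcdA a b + b * Nat.gcdB a b := Nat.gcd_eq_gcd_ab a b
        have := congrArg (Int.cast (R := F)) this
        push_cast at this
        rw [this, ha', hb']; ring
      rw [hab] at h1
      simp at h1
    have hcc : (C c⁻¹ : MvPolynomial (Fin 2) F) * C c = 1 := by
      rw [← C_mul, inv_mul_cancel₀ hc, C_1]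
    refine (key hij.symm hb ha ha' (inv_ne_zero hc) V U ?_).symm
    have hcc' : (Polynomial.C (C c⁻¹) : Polynomial (MvPolynomial (Fin 2) F)) *
      Polynomial.C (C c) = 1 := by rw [← Polynomial.C_mul, hcc, Polynomial.C_1]
    have e1 : (X j ^ a - C c⁻¹ * X i ^ b : MvPolynomial (Fin 2) F) =
        - (C c⁻¹) * (X i ^ b - C c * X j ^ a) := by
      linear_combination (-X j ^ a) * hcc
    rw [e1, Polynomial.C_mul, ← h]
    simp only [map_neg]
    linear_combination (-V ^ a) * hcc'
  · exact key hij ha hb hb' hc U V h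

end Curves

open MvPolynomial

/-! ### Weighted leading forms -/

/-- Every monomial of `p` has `w`-weight at most `d`. -/
def WB {σ F : Type*} [CommRing F] (w : σ → ℚ) (d : ℚ) (p : MvPolynomial σ F) : Prop :=
  ∀ m, p.coeff m ≠ 0 → Finsupp.weight w m ≤ d

section Weights

variable {σ κ F : Type*} [CommRing F] {w : σ → ℚ}

lemma WB.mul {a b : ℚ} {p q : MvPolynomial σ F} (hp : WB w a p) (hq : WB w b q) :
    WB w (a + b) (p * q) := by
  classical
  intro m hm
  rw [coeff_mul] at hm
  obtain ⟨x, hx, hne⟩ := Finset.exists_ne_zero_of_sum_ne_zero hm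
  rw [Finset.HasAntidiagonal.mem_antidiagonal] at hx
  have h1 := hp x.1 (left_ne_zero_of_mul hne)
  have h2 := hq x.2 (right_ne_zero_of_mul hne)
  rw [← hx, map_add]
  linarith

lemma comp_mul {a b : ℚ} {p q : MvPolynomial σ F} (hp : WB w a p) (hq : WB w b q) :
    weightedHomogeneousComponent w (a + b) (p * q) =
      weightedHomogeneousComponent w a p * weightedHomogeneousComponent w b q := by
  classical
  ext m
  rw [coeff_weightedHomogeneousComponent, coeff_mul, coeff_mul]
  split_ifs with h
  · refine Finset.sum_congr rfl fun x hx => ?_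
    rw [Finset.HasAntidiagonal.mem_antidiagonal] at hx
    rw [coeff_weightedHomogeneousComponent, coeff_weightedHomogeneousComponent]
    rw [← hx, map_add] at h
    by_cases h1 : p.coeff x.1 = 0
    · simp [h1]
    by_cases h2 : q.coeff x.2 = 0
    · simp [h2]
    have h1' := hp _ h1
    have h2' := hq _ h2
    rw [if_pos (by linarith), if_pos (by linarith)]
  · symm
    refine Finset.sum_eq_zero fun x hx => ?_
    rw [Finset.HasAntidiagonal.mem_antidiagonal] at hx
    rw [coeff_weightedHomogeneousComponent, coeff_weightedHomogeneousComponent]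
    rw [← hx, map_add] at h
    split_ifs with h1 h2
    · exact absurd (by rw [h1, h2]) h
    all_goals simp

lemma WB.one : WB w 0 (1 : MvPolynomial σ F) := by
  classical
  intro m hm
  rw [coeff_one] at hm
  split_ifs at hm with h
  · simp [← h]
  · simp at hm

lemma comp_one : weightedHomogeneousComponent w 0 (1 : MvPolynomial σ F) = 1 :=
  (isWeightedHomogeneous_one F w).weightedHomogeneousComponent_same

lemma WB.pow {a : ℚ} {p : MvPolynomial σ F} (hp : WB w a p) (n : ℕ) :
    WB w (n • a) (p ^ n) ∧ weightedHomogeneousComponent w (n • a) (p ^ n) =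
      weightedHomogeneousComponent w a p ^ n := by
  induction n with
  | zero => simpa using ⟨WB.one, comp_one⟩
  | succ n ih =>
    rw [succ_nsmul, pow_succ, pow_succ, comp_mul ih.1 hp, ih.2]
    exact ⟨ih.1.mul hp, rfl⟩

lemma WB.add {a : ℚ} {p q : MvPolynomial σ F} (hp : WB w a p) (hq : WB w a q) :
    WB w a (p + q) := by
  intro m hm
  rw [coeff_add] at hm
  by_cases h : p.coeff m = 0
  · rw [h, zero_add] at hm
    exact hq _ hm
  · exact hp _ h

lemma WB.mono {a b : ℚ} {p : MvPolynomial σ F} (hp : WB w a p) (h : a ≤ b) : WB w b p :=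
  fun m hm => (hp m hm).trans h

lemma comp_eq_zero_of_lt {a b : ℚ} {p : MvPolynomial σ F} (hp : WB w a p) (h : a < b) :
    weightedHomogeneousComponent w b p = 0 := by
  classical
  ext m
  rw [coeff_weightedHomogeneousComponent, coeff_zero]
  split_ifs with h1
  · by_contra h2
    exact absurd (hp m h2) (by linarith)
  · rfl

lemma WB.monomial_aeval {v : κ → ℚ} {g : κ → MvPolynomial σ F} (hg : ∀ i, WB w (v i) (g i))
    (m : κ →₀ ℕ) :
    WB w (Finsupp.weight v m) (m.prod fun i n => g i ^ n) ∧
    weightedHomogeneousComponent w (Finsupp.weight v m) (m.prod fun i n => g i ^ n) =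
      m.prod fun i n => weightedHomogeneousComponent w (v i) (g i) ^ n := by
  classical
  induction m using Finsupp.induction_linear with
  | zero => simpa using ⟨WB.one, comp_one⟩
  | add f g' h1 h2 =>
    rw [map_add, Finsupp.prod_add_index' (by simp) (by simp [pow_add]),
      Finsupp.prod_add_index' (by simp) (by simp [pow_add]), comp_mul h1.1 h2.1, h1.2, h2.2]
    exact ⟨h1.1.mul h2.1, rfl⟩
  | single i n =>
    rw [Finsupp.weight_single, Finsupp.prod_single_index (by simp),
      Finsupp.prod_single_index (by simp)]
    exact (hg i).pow n

/-- Substituting polynomials `g i` of `w`-weight at most `v i` into a polynomial `q` of `v`-weight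
at most `d`: the component of weight `d` of the result only sees the top components. -/
lemma WB.aeval {v : κ → ℚ} {g : κ → MvPolynomial σ F} (hg : ∀ i, WB w (v i) (g i))
    {d : ℚ} {q : MvPolynomial κ F} (hq : WB v d q) :
    WB w d (MvPolynomial.aeval g q) ∧
    weightedHomogeneousComponent w d (MvPolynomial.aeval g q) =
      MvPolynomial.aeval (fun i => weightedHomogeneousComponent w (v i) (g i))
        (weightedHomogeneousComponent v d q) := by
  classical
  induction q using MvPolynomial.monomial_add_induction_on with
  | C a =>
    rw [← mul_one (C a), ← smul_eq_C_mul, map_smul, map_smul, map_smul, map_smul, map_one]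
    by_cases ha : a = 0
    · subst ha
      refine ⟨?_, by simp⟩
      intro m hm
      simp at hm
    · have hd : 0 ≤ d := by simpa using hq 0 (by simpa using ha)
      refine ⟨?_, ?_⟩
      · intro m hm
        rw [coeff_smul] at hm
        exact (WB.one m (right_ne_zero_of_mul hm)).trans hd
      · rcases hd.eq_or_lt with rfl | hd
        · rw [comp_one, comp_one, map_one]
        · rw [comp_eq_zero_of_lt WB.one hd, comp_eq_zero_of_lt WB.one hd, map_zero]
  | monomial_add a b f ha hb ih =>
    have hf : WB v d f := by
      intro m hm
      apply hq m
      have : m ≠ a := by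
        rintro rfl
        exact ha (mem_support_iff.2 hm)
      rwa [coeff_add, coeff_monomial, if_neg this.symm, zero_add]
    have hw : Finsupp.weight v a ≤ d := by
      apply hq a
      rw [coeff_add, coeff_monomial, if_pos rfl, notMem_support_iff.1 ha, add_zero]
      exact hb
    obtain ⟨ih1, ih2⟩ := ih hf
    obtain ⟨m1, m2⟩ := WB.monomial_aeval hg a
    have key : WB w d (MvPolynomial.aeval g (monomial a b)) ∧
        weightedHomogeneousComponent w d (MvPolynomial.aeval g (monomial a b)) =
          MvPolynomial.aeval (fun i => weightedHomogeneousComponent w (v i) (g i))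
          (weightedHomogeneousComponent v d (monomial a b)) := by
      rw [aeval_monomial, MvPolynomial.algebraMap_eq, ← smul_eq_C_mul]
      refine ⟨?_, ?_⟩
      · intro m hm
        rw [coeff_smul] at hm
        exact (m1 m (right_ne_zero_of_mul hm)).trans hw
      · rw [map_smul]
        rcases hw.eq_or_lt with rfl | hd
        · rw [(isWeightedHomogeneous_monomial v a b rfl).weightedHomogeneousComponent_same,
            aeval_monomial, MvPolynomial.algebraMap_eq, ← smul_eq_C_mul, m2]
        · rw [(isWeightedHomogeneous_monomial v a b rfl).weightedHomogeneousComponent_ne d hd.ne',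
            comp_eq_zero_of_lt m1 hd, map_zero, smul_zero]
    rw [map_add, map_add, map_add, map_add, key.2, ih2]
    exact ⟨key.1.add ih1, rfl⟩

end Weights

/-! ### Total degree as a weight -/

section TotalDegree

variable {σ F : Type*} [CommRing F]

lemma weight_one (m : σ →₀ ℕ) : Finsupp.weight (fun _ : σ => (1 : ℚ)) m = (m.degree : ℚ) := by
  simp [Finsupp.weight_apply, Finsupp.degree_apply, Finsupp.sum]

lemma WB_one_iff {d : ℕ} {p : MvPolynomial σ F} :
    WB (fun _ => (1 : ℚ)) d p ↔ p.totalDegree ≤ d := by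
  unfold WB
  rw [totalDegree, Finset.sup_le_iff]
  simp only [weight_one, mem_support_iff, Nat.cast_le]
  rfl

lemma WB_totalDegree (p : MvPolynomial σ F) : WB (fun _ => (1 : ℚ)) p.totalDegree p :=
  WB_one_iff.2 le_rfl

/-- The leading form with respect to the total degree. -/
noncomputable def top (p : MvPolynomial σ F) : MvPolynomial σ F :=
  weightedHomogeneousComponent (fun _ => (1 : ℚ)) p.totalDegree p

lemma top_ne_zero {p : MvPolynomial σ F} (hp : p ≠ 0) : top p ≠ 0 := by
  classical
  obtain ⟨m, hm, hd⟩ : ∃ m ∈ p.support, m.degree = p.totalDegree := by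
    have := Finset.exists_mem_eq_sup p.support (by simpa using hp) (fun m => m.degree)
    obtain ⟨m, hm, h⟩ := this
    exact ⟨m, hm, by rw [← h]; rfl⟩
  intro h
  have := congrArg (coeff m) h
  rw [top, coeff_weightedHomogeneousComponent, if_pos (by rw [weight_one, hd])] at this
  exact mem_support_iff.1 hm (by simpa using this)

lemma totalDegree_lt_of_comp_eq_zero {d : ℕ} {p : MvPolynomial σ F} (hd : 0 < d)
    (hp : WB (fun _ => (1 : ℚ)) d p)
    (h : weightedHomogeneousComponent (fun _ => (1 : ℚ)) d p = 0) : p.totalDegree < d := by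
  classical
  refine lt_of_le_of_ne (WB_one_iff.1 hp) ?_
  rintro rfl
  refine top_ne_zero ?_ h
  rintro rfl
  simp at hd

lemma totalDegree_aeval_le {κ : Type*} {g : κ → MvPolynomial σ F}
    (hg : ∀ i, (g i).totalDegree ≤ 1) (q : MvPolynomial κ F) :
    (aeval g q).totalDegree ≤ q.totalDegree := by
  have := (WB.aeval (v := fun _ => 1) (fun i => by simpa using WB_one_iff.2 (hg i))
    (WB_totalDegree q)).1
  exact WB_one_iff.1 this

/-- The polynomials `g i` substituted into `q` do not interfere when one monomial of `q`
strictly dominates all others. -/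
lemma totalDegree_aeval_of_dominant [IsDomain F] {κ : Type*} {g : κ → MvPolynomial σ F}
    (hg : ∀ i, g i ≠ 0)
    {q : MvPolynomial κ F} (m : κ →₀ ℕ) (hm : q.coeff m ≠ 0)
    (hdom : ∀ m', q.coeff m' ≠ 0 → m' ≠ m →
      Finsupp.weight (fun i => (g i).totalDegree) m' <
        Finsupp.weight (fun i => (g i).totalDegree) m) :
    (aeval g q).totalDegree = Finsupp.weight (fun i => (g i).totalDegree) m := by
  classical
  have hcast : ∀ m' : κ →₀ ℕ, Finsupp.weight (fun i => ((g i).totalDegree : ℚ)) m' =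
      ((Finsupp.weight (fun i => (g i).totalDegree) m' : ℕ) : ℚ) := by
    intro m'
    simp [Finsupp.weight_apply, Finsupp.sum]
  set N := Finsupp.weight (fun i => (g i).totalDegree) m with hN
  have hWB : WB (fun i => ((g i).totalDegree : ℚ)) (N : ℚ) q := by
    intro m' hm'
    rw [hcast]
    by_cases h : m' = m
    · subst h; exact le_rfl
    · exact_mod_cast (hdom m' hm' h).le
  obtain ⟨h1, h2⟩ := WB.aeval (fun i => WB_totalDegree (g i)) hWB
  have h3 : weightedHomogeneousComponent (fun i => ((g i).totalDegree : ℚ)) (N : ℚ) q =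
      monomial m (q.coeff m) := by
    ext m'
    rw [coeff_weightedHomogeneousComponent, coeff_monomial, hcast]
    by_cases h : m = m'
    · subst h; simp [hN]
    · rw [if_neg h]
      split_ifs with h'
      · by_contra h''
        exact absurd (hdom m' h'' (Ne.symm h)) (by rw [Nat.cast_inj.1 h']; exact lt_irrefl _)
      · rfl
  refine le_antisymm (WB_one_iff.1 h1) ?_
  by_contra hlt
  push Not at hlt
  rw [h3, comp_eq_zero_of_lt (WB_totalDegree _) (by exact_mod_cast hlt), aeval_monomial] at h2
  have : (m.prod fun i k => top (g i) ^ k) ≠ 0 :=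
    Finset.prod_ne_zero_iff.2 fun i _ => pow_ne_zero _ (top_ne_zero (hg i))
  exact mul_ne_zero (by simpa using hm) this h2.symm

end TotalDegree

/-! ### Degenerating the additive group action attached to a coordinate system -/

section Degeneration

variable {F : Type*} [Field F]

lemma weight_cons {n : ℕ} (τ : ℚ) (w : Fin n → ℚ) (i : ℕ) (m : Fin n →₀ ℕ) :
    Finsupp.weight (Fin.cons τ w : Fin (n + 1) → ℚ) (m.cons i) = i * τ + Finsupp.weight w m := by
  simp [Finsupp.weight_eq_sum, Fin.sum_univ_succ]

/-- The deformation `p ↦ ψ p` of the identity of the plane, with parameter the polynomial variable,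
fixes the `w`-leading form of the coordinate `e (X 0)` and is not trivial. It is the leading form,
for a suitable weight of the parameter, of the additive group action translating `e (X 1)` and
fixing `e (X 0)`. -/
lemma exists_degeneration (w : Fin 2 → ℚ)
    (e : MvPolynomial (Fin 2) F ≃ₐ[F] MvPolynomial (Fin 2) F) {d : ℚ} (hd : WB w d (e (X 0))) :
    ∃ ψ : MvPolynomial (Fin 2) F →ₐ[F] Polynomial (MvPolynomial (Fin 2) F),
      (∀ p, (ψ p).coeff 0 = p) ∧
      ψ (weightedHomogeneousComponent w d (e (X 0))) =
        Polynomial.C (weightedHomogeneousComponent w d (e (X 0))) ∧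
      ∃ k, (ψ (X k)).natDegree ≠ 0 := by
  classical
  -- the translation action: it fixes `e (X 0)` and moves `e (X 1)` by the parameter
  let φ' : MvPolynomial (Fin 2) F →ₐ[F] Polynomial (MvPolynomial (Fin 2) F) :=
    (aeval ![Polynomial.C (e (X 0)), Polynomial.C (e (X 1)) + Polynomial.X]).comp
      e.symm.toAlgHom
  have hφ0 : φ' (e (X 0)) = Polynomial.C (e (X 0)) := by simp [φ']
  have hφ1 : φ' (e (X 1)) = Polynomial.C (e (X 1)) + Polynomial.X := by simp [φ']
  let z : Polynomial (MvPolynomial (Fin 2) F) →ₐ[F] MvPolynomial (Fin 2) F :=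
    (Polynomial.aeval (R := MvPolynomial (Fin 2) F) (0 : MvPolynomial (Fin 2) F)).restrictScalars F
  have hz : ∀ p, z p = p.coeff 0 := fun p => by
    simp [z, Polynomial.coeff_zero_eq_aeval_zero]
  have hzφ : ∀ p, (φ' p).coeff 0 = p := by
    have : (z.comp φ').comp e.toAlgHom = e.toAlgHom := by
      apply MvPolynomial.algHom_ext
      intro i
      fin_cases i
      · simp [hφ0, hz]
      · simp [hφ1, hz]
    intro p
    have h := DFunLike.congr_fun this (e.symm p)
    simpa [hz] using h
  let Φ := finSuccEquiv F 2
  let φ : MvPolynomial (Fin 2) F →ₐ[F] MvPolynomial (Fin 3) F := Φ.symm.toAlgHom.comp φ'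
  have hΦφ : ∀ p, Φ (φ p) = φ' p := fun p => by simp [φ]
  have hcoeff : ∀ p i m, (φ p).coeff (Finsupp.cons i m) = ((φ' p).coeff i).coeff m := by
    intro p i m
    rw [← hΦφ, finSuccEquiv_coeff_coeff]
  -- the monomials of the images of the two variables that involve the parameter
  let T : Finset (Fin 2 × (Fin 3 →₀ ℕ)) :=
    Finset.univ.sigma (fun k => (φ (X k)).support.filter (fun m => m 0 ≠ 0)) |>.map
      (Equiv.sigmaEquivProd _ _).toEmbedding
  have hT : ∀ k m, (k, m) ∈ T ↔ (φ (X k)).coeff m ≠ 0 ∧ m 0 ≠ 0 := by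
    intro k m
    simp [T]
  have hTne : T.Nonempty := by
    by_contra hne
    have hφC : φ' = (IsScalarTower.toAlgHom F (MvPolynomial (Fin 2) F)
        (Polynomial (MvPolynomial (Fin 2) F))) := by
      apply MvPolynomial.algHom_ext
      intro k
      ext i m
      rcases Nat.eq_zero_or_pos i with rfl | hi
      · rw [hzφ]
        simp
      · have : (φ (X k)).coeff (Finsupp.cons i m) = 0 := by
          by_contra h
          exact hne ⟨_, (hT k _).2 ⟨h, by simpa using hi.ne'⟩⟩
        rw [← hcoeff, this]
        simp [Polynomial.coeff_C_of_ne_zero hi.ne']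
    have h := hφ1
    rw [hφC] at h
    have h_coeff := congrArg (fun p => Polynomial.coeff p 1) h
    simp at h_coeff
  -- the weight `τ` of the parameter is the largest one for which the action does not raise weights
  let slope : Fin 2 × (Fin 3 →₀ ℕ) → ℚ := fun x =>
    (w x.1 - Finsupp.weight w x.2.tail) / (x.2 0 : ℚ)
  obtain ⟨⟨k₀, m₀⟩, hkm, hmin⟩ := T.exists_min_image slope hTne
  set τ := slope (k₀, m₀) with hτ
  let w' : Fin 3 → ℚ := Fin.cons τ w
  have hw' : ∀ m : Fin 3 →₀ ℕ, Finsupp.weight w' m = m 0 * τ + Finsupp.weight w m.tail := by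
    intro m
    conv_lhs => rw [← Finsupp.cons_tail m]
    exact weight_cons τ w _ _
  have hzero : ∀ k (m : Fin 2 →₀ ℕ), (φ (X k)).coeff (Finsupp.cons 0 m) =
      (X k : MvPolynomial (Fin 2) F).coeff m := fun k m => by rw [hcoeff, hzφ]
  have hsingle : ∀ k (m : Fin 2 →₀ ℕ), (X k : MvPolynomial (Fin 2) F).coeff m ≠ 0 →
      Finsupp.weight w m = w k := by
    intro k m h
    rw [coeff_X] at h
    split_ifs at h with h1
    · rw [← h1, Finsupp.weight_single, one_smul]
    · exact absurd rfl h
  have hWB : ∀ k, WB w' (w k) (φ (X k)) := by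
    intro k m hm
    rw [hw']
    by_cases h0 : m 0 = 0
    · rw [← Finsupp.cons_tail m, h0, hzero] at hm
      rw [h0, hsingle k _ hm]
      simp
    · have h1 := hmin (k, m) ((hT k m).2 ⟨hm, h0⟩)
      have hpos : (0 : ℚ) < m 0 := by exact_mod_cast Nat.pos_of_ne_zero h0
      have h2 : τ ≤ (w k - Finsupp.weight w m.tail) / (m 0 : ℚ) := h1
      rw [le_div_iff₀ hpos] at h2
      linarith
  let ψ : MvPolynomial (Fin 2) F →ₐ[F] Polynomial (MvPolynomial (Fin 2) F) :=
    Φ.toAlgHom.comp (aeval fun k => weightedHomogeneousComponent w' (w k) (φ (X k)))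
  have hψX : ∀ k i m, ((ψ (X k)).coeff i).coeff m =
      if Finsupp.weight w' (Finsupp.cons i m) = w k then
        (φ (X k)).coeff (Finsupp.cons i m) else 0 := by
    intro k i m
    have : ψ (X k) = Φ (weightedHomogeneousComponent w' (w k) (φ (X k))) := by simp [ψ]
    rw [this, finSuccEquiv_coeff_coeff, coeff_weightedHomogeneousComponent]
  refine ⟨ψ, ?_, ?_, k₀, ?_⟩
  · have : z.comp ψ = AlgHom.id F _ := by
      apply MvPolynomial.algHom_ext
      intro k
      ext m
      rw [AlgHom.comp_apply, hz, hψX, hzero, weight_cons, AlgHom.id_apply]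
      split_ifs with h
      · rfl
      · by_contra h'
        exact h (by simpa using hsingle k m (Ne.symm h'))
    intro p
    rw [← hz]
    exact DFunLike.congr_fun this p
  · have h := (WB.aeval hWB hd).2
    have h1 : ∀ p, aeval (fun k => φ (X k)) p = φ p := by
      intro p
      have := aeval_unique φ
      exact (DFunLike.congr_fun this p).symm
    rw [h1] at h
    have h2 : ψ (weightedHomogeneousComponent w d (e (X 0))) =
        Φ (weightedHomogeneousComponent w' d (φ (e (X 0)))) := by
      rw [h]; rfl
    rw [h2]
    ext i m
    rw [finSuccEquiv_coeff_coeff, coeff_weightedHomogeneousComponent, hcoeff, hφ0, weight_cons,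
      Polynomial.coeff_C, Polynomial.coeff_C]
    by_cases hi : i = 0
    · subst hi
      simp [coeff_weightedHomogeneousComponent]
    · simp [hi]
  · obtain ⟨h1, h2⟩ := (hT _ _).1 hkm
    have h3 : ((ψ (X k₀)).coeff (m₀ 0)).coeff m₀.tail ≠ 0 := by
      rw [hψX, Finsupp.cons_tail, if_pos]
      · exact h1
      · have hpos : (m₀ 0 : ℚ) ≠ 0 := by exact_mod_cast h2
        rw [hw', hτ]
        simp only [slope]
        field_simp
        ring
    intro h4
    have h5 : (ψ (X k₀)).coeff (m₀ 0) = 0 :=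
      Polynomial.coeff_eq_zero_of_natDegree_lt (by omega)
    rw [h5] at h3
    exact h3 rfl

/-- Factors of an element fixed by a deformation of the identity are fixed. -/
lemma fixed_of_dvd {S : Type*} [CommRing S] [IsDomain S] (ψ : S →+* Polynomial S)
    (h0 : ∀ p, (ψ p).coeff 0 = p) {f h : S} (hf : f ≠ 0) (hψ : ψ f = Polynomial.C f)
    (hdvd : h ∣ f) : ψ h = Polynomial.C h := by
  obtain ⟨g, rfl⟩ := hdvd
  have hn := congrArg Polynomial.natDegree hψ
  have hne : ψ h * ψ g ≠ 0 := by
    rw [← map_mul, hψ]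
    simpa using hf
  rw [map_mul, Polynomial.natDegree_mul (left_ne_zero_of_mul hne) (right_ne_zero_of_mul hne),
    Polynomial.natDegree_C] at hn
  rw [Polynomial.eq_C_of_natDegree_eq_zero (p := ψ h) (by omega), h0]

end Degeneration

/-! ### Leading forms of coordinates in the plane -/

section Leading

variable {F : Type*} [Field F]

lemma X_dvd_of_coeff {p : MvPolynomial (Fin 2) F} (i : Fin 2)
    (h : ∀ m, p.coeff m ≠ 0 → m i ≠ 0) : X i ∣ p := by
  rw [p.as_sum]
  refine Finset.dvd_sum fun m hm => X_dvd_monomial.2 (Or.inr (h m (mem_support_iff.1 hm)))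

lemma coeff_top {σ R : Type*} [CommRing R] {p : MvPolynomial σ R} {m : σ →₀ ℕ}
    (h : (top p).coeff m ≠ 0) : m.degree = p.totalDegree ∧ p.coeff m ≠ 0 := by
  classical
  rw [top, coeff_weightedHomogeneousComponent, weight_one] at h
  split_ifs at h with h1
  · exact ⟨by exact_mod_cast h1, h⟩
  · exact absurd rfl h

lemma totalDegree_top {σ R : Type*} [CommRing R] {p : MvPolynomial σ R} (hp : p ≠ 0) :
    (top p).totalDegree = p.totalDegree := by
  apply le_antisymm
  · rw [totalDegree, Finset.sup_le_iff]
    intro m hm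
    exact (coeff_top (mem_support_iff.1 hm)).1.le
  · obtain ⟨m, hm⟩ := ne_zero_iff.1 (top_ne_zero hp)
    rw [← (coeff_top hm).1]
    exact le_totalDegree (mem_support_iff.2 hm)

/-- The leading form of a coordinate involves a pure power of one of the two variables:
otherwise both variables divide it, so both are fixed by a nontrivial deformation. -/
lemma exists_pure_power (e : MvPolynomial (Fin 2) F ≃ₐ[F] MvPolynomial (Fin 2) F) :
    ∃ i, (e (X 0)).coeff (Finsupp.single i (e (X 0)).totalDegree) ≠ 0 := by
  by_contra! hall
  set f := e (X 0) with hf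
  have hf0 : f ≠ 0 := by
    rw [hf, map_ne_zero_iff e e.injective]
    exact X_ne_zero 0
  obtain ⟨ψ, h0, hfix, k, hk⟩ := exists_degeneration (fun _ => (1 : ℚ)) e (WB_totalDegree _)
  have hdvd : ∀ i j : Fin 2, i ≠ j → X i ∣ top f := by
    intro i j hij
    refine X_dvd_of_coeff i fun m hm hmi => ?_
    obtain ⟨h1, h2⟩ := coeff_top hm
    have : m = Finsupp.single j f.totalDegree := by
      rw [← h1]
      ext l
      have hl : l = i ∨ l = j := by omega
      rw [Finsupp.degree_eq_sum, Fin.sum_univ_two]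
      rcases hl with rfl | rfl
      · simp [hij.symm, hmi]
      · rw [Finsupp.single_eq_same]
        fin_cases i <;> fin_cases l <;> simp_all
    rw [this] at h2
    exact h2 (hall j)
  have : ∀ i, ψ (X i) = Polynomial.C (X i) := by
    intro i
    obtain ⟨j, hj⟩ : ∃ j : Fin 2, i ≠ j := ⟨i + 1, by fin_cases i <;> simp⟩
    exact fixed_of_dvd ψ.toRingHom h0 (top_ne_zero hf0) hfix (hdvd i j hj)
  rw [this, Polynomial.natDegree_C] at hk
  exact hk rfl

/-- `F` is algebraically closed in the fraction field of a polynomial ring: two polynomials of the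
same degree satisfying a homogeneous relation are proportional. -/
lemma proportional_of_relation {ι σ : Type*} (s : Finset ι) (κ : ι → ℕ) (c : ι → F)
    (K : ℕ) (hK : ∀ m ∈ s, κ m ≤ K) (hh : ∑ m ∈ s, Polynomial.monomial (κ m) (c m) ≠ 0)
    {u v : MvPolynomial σ F} (hu : u ≠ 0) (hv : v ≠ 0) (hdeg : u.totalDegree = v.totalDegree)
    (hrel : ∑ m ∈ s, C (c m) * (u ^ κ m * v ^ (K - κ m)) = 0) :
    ∃ r : F, r ≠ 0 ∧ u = C r * v ∧ ∑ m ∈ s, c m * r ^ κ m = 0 := by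
  let S := MvPolynomial σ F
  let Q := FractionRing S
  let ι' := algebraMap S Q
  have hι : Function.Injective ι' := IsFractionRing.injective _ _
  have hv' : ι' v ≠ 0 := by rwa [map_ne_zero_iff ι' hι]
  have key : ∑ m ∈ s, ι' (C (c m)) * (ι' u / ι' v) ^ κ m = 0 := by
    have h1 := congrArg ι' hrel
    rw [map_sum, map_zero] at h1
    have h2 : (∑ m ∈ s, ι' (C (c m)) * (ι' u / ι' v) ^ κ m) * ι' v ^ K = 0 := by
      rw [← h1, Finset.sum_mul]
      refine Finset.sum_congr rfl fun m hm => ?_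
      rw [map_mul, map_mul, map_pow, map_pow, div_pow]
      have : ι' v ^ K = ι' v ^ κ m * ι' v ^ (K - κ m) := by
        rw [← pow_add, Nat.add_sub_cancel' (hK m hm)]
      rw [this]
      have hvk : ι' v ^ κ m ≠ 0 := pow_ne_zero _ hv'
      rw [mul_assoc, ← mul_assoc (_ / _), div_mul_cancel₀ _ hvk]
    exact (mul_eq_zero.1 h2).resolve_right (pow_ne_zero _ hv')
  have hmap : ∀ r : F, algebraMap F Q r = ι' (C r) := fun r => by
    rw [IsScalarTower.algebraMap_apply F S Q]; rfl
  have halg : IsAlgebraic F (ι' u / ι' v) := by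
    refine ⟨_, hh, ?_⟩
    rw [map_sum, ← key]
    refine Finset.sum_congr rfl fun m _ => ?_
    rw [Polynomial.aeval_monomial, hmap]
  have h_integral : IsIntegral S (ι' u / ι' v) := halg.isIntegral.tower_top
  obtain ⟨y, hy⟩ := IsIntegrallyClosed.algebraMap_eq_of_integral h_integral
  have huv : u = y * v := by
    apply hι
    rw [map_mul]
    change _ = algebraMap S Q y * _
    rw [hy, div_mul_cancel₀ _ hv']
  have hy0 : y ≠ 0 := by rintro rfl; simp at huv; exact hu huv
  have hydeg : y.totalDegree = 0 := by
    rw [huv, totalDegree_mul_of_isDomain hy0 hv] at hdeg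
    omega
  rw [totalDegree_eq_zero_iff_eq_C] at hydeg
  refine ⟨y.coeff 0, ?_, ?_, ?_⟩
  · intro h
    rw [h, C_0] at hydeg
    exact hy0 hydeg
  · rw [← hydeg, huv]
  · rw [← hy, hydeg] at key
    have : ι' (C (∑ m ∈ s, c m * coeff 0 y ^ κ m)) = 0 := by
      rw [← key, map_sum, map_sum]
      refine Finset.sum_congr rfl fun m _ => ?_
      rw [C_mul, C_pow, map_mul, map_pow]
    rwa [map_eq_zero_iff ι' hι, C_eq_zero] at this

/-- When the exponents of `p` are constant modulo `b` and `a`, the value of `p` at `g` is a monomial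
times a polynomial in `g 1 ^ b` and `g 0 ^ a`. -/
lemma aeval_of_weighted {T : Type*} [CommRing T] [Algebra F T] (g : Fin 2 → T)
    {p : MvPolynomial (Fin 2) F} {a b ρ ρ' : ℕ}
    (hρ : ∀ m ∈ p.support, m 1 % b = ρ) (hρ' : ∀ m ∈ p.support, m 0 % a = ρ') :
    aeval g p = g 1 ^ ρ * g 0 ^ ρ' * ∑ m ∈ p.support, algebraMap F T (p.coeff m) *
      ((g 1 ^ b) ^ (m 1 / b) * (g 0 ^ a) ^ (m 0 / a)) := by
  rw [aeval_def, eval₂_eq', Finset.mul_sum]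
  refine Finset.sum_congr rfl fun m hm => ?_
  rw [Fin.prod_univ_two]
  have h1 : g 1 ^ m 1 = g 1 ^ ρ * (g 1 ^ b) ^ (m 1 / b) := by
    rw [← hρ m hm, ← pow_mul, ← pow_add, Nat.mod_add_div]
  have h0 : g 0 ^ m 0 = g 0 ^ ρ' * (g 0 ^ a) ^ (m 0 / a) := by
    rw [← hρ' m hm, ← pow_mul, ← pow_add, Nat.mod_add_div]
  rw [h1, h0]
  ring

/-- A quasi-homogeneous polynomial vanishing at `(y, x)` with `deg x ^ b = deg y ^ a` forces
`x ^ b` and `y ^ a` to be proportional, with the corresponding binomial as a factor. -/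
lemma exists_binomial_factor {p : MvPolynomial (Fin 2) F} (hp : p ≠ 0) {a b D : ℕ}
    (ha : 0 < a) (hb : 0 < b)
    (hab : Nat.Coprime a b) (hD : ∀ m, p.coeff m ≠ 0 → a * m 1 + b * m 0 = D)
    (g : Fin 2 → MvPolynomial (Fin 2) F) (hg : ∀ i, g i ≠ 0)
    (hdeg : (g 1 ^ b).totalDegree = (g 0 ^ a).totalDegree) (hz : aeval g p = 0) :
    ∃ r : F, r ≠ 0 ∧ g 1 ^ b = C r * g 0 ^ a ∧
      (X 1 ^ b - C r * X 0 ^ a : MvPolynomial (Fin 2) F) ∣ p := by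
  obtain ⟨n, hn⟩ := ne_zero_iff.1 hp
  have hρ : ∀ m ∈ p.support, m 1 % b = n 1 % b := by
    intro m hm
    have h1 := hD m (mem_support_iff.1 hm)
    have h2 := hD n hn
    have : a * m 1 ≡ a * n 1 [MOD b] := by
      have h3 : (a * m 1 + b * m 0) % b = (a * n 1 + b * n 0) % b := by rw [h1, h2]
      simpa [Nat.ModEq] using h3
    exact Nat.ModEq.cancel_left_of_coprime (by rw [Nat.gcd_comm]; exact hab) this
  have hρ' : ∀ m ∈ p.support, m 0 % a = n 0 % a := by
    intro m hm
    have h1 := hD m (mem_support_iff.1 hm)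
    have h2 := hD n hn
    have : b * m 0 ≡ b * n 0 [MOD a] := by
      have h3 : (a * m 1 + b * m 0) % a = (a * n 1 + b * n 0) % a := by rw [h1, h2]
      simpa [Nat.ModEq] using h3
    exact Nat.ModEq.cancel_left_of_coprime hab this
  have hsum : ∀ m ∈ p.support, m 1 / b + m 0 / a = n 1 / b + n 0 / a := by
    intro m hm
    have h1 := hD m (mem_support_iff.1 hm)
    have h2 := hD n hn
    have e1 := Nat.mod_add_div (m 1) b
    have e2 := Nat.mod_add_div (n 1) b
    have e3 := Nat.mod_add_div (m 0) a
    have e4 := Nat.mod_add_div (n 0) a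
    rw [hρ m hm] at e1
    rw [hρ' m hm] at e3
    have : a * b * (m 1 / b + m 0 / a) = a * b * (n 1 / b + n 0 / a) := by
      have := h1.trans h2.symm
      rw [← e1, ← e2, ← e3, ← e4] at this
      nlinarith
    exact Nat.eq_of_mul_eq_mul_left (Nat.mul_pos ha hb) this
  set K := n 1 / b + n 0 / a with hKdef
  have hsub : ∀ m ∈ p.support, m 0 / a = K - m 1 / b := fun m hm => by
    have := hsum m hm
    lia
  have hKle : ∀ m ∈ p.support, m 1 / b ≤ K := fun m hm => by
    have := hsum m hm
    lia
  have hh : ∑ m ∈ p.support, Polynomial.monomial (m 1 / b) (p.coeff m) ≠ 0 := by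
    intro h
    have h1 := congrArg (fun q => Polynomial.coeff q (n 1 / b)) h
    simp only [Polynomial.finsetSum_coeff, Polynomial.coeff_monomial, Polynomial.coeff_zero] at h1
    rw [Finset.sum_eq_single n] at h1
    · simp at h1
      exact hn h1
    · intro m hm hmn
      rw [if_neg]
      intro h2
      apply hmn
      have h3 := hsum m hm
      ext l
      fin_cases l
      · change m 0 = n 0
        rw [← Nat.mod_add_div (m 0) a, ← Nat.mod_add_div (n 0) a, hρ' m hm]
        congr 2
        omega
      · change m 1 = n 1
        rw [← Nat.mod_add_div (m 1) b, ← Nat.mod_add_div (n 1) b, hρ m hm, h2]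
    · intro h2
      exact absurd (mem_support_iff.2 hn) h2
  have hrel : ∑ m ∈ p.support, C (p.coeff m) *
      ((g 1 ^ b) ^ (m 1 / b) * (g 0 ^ a) ^ (K - m 1 / b)) = 0 := by
    rw [aeval_of_weighted g hρ hρ'] at hz
    have h1 := (mul_eq_zero.1 hz).resolve_left
      (mul_ne_zero (pow_ne_zero _ (hg 1)) (pow_ne_zero _ (hg 0)))
    rw [← h1]
    refine Finset.sum_congr rfl fun m hm => ?_
    rw [← hsub m hm]
    rfl
  obtain ⟨r, hr, hru, hr0⟩ := proportional_of_relation p.support (fun m => m 1 / b)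
    (fun m => p.coeff m) K hKle hh (pow_ne_zero b (hg 1)) (pow_ne_zero a (hg 0)) hdeg hrel
  refine ⟨r, hr, hru, ?_⟩
  have hpX : p = X 1 ^ (n 1 % b) * X 0 ^ (n 0 % a) * ∑ m ∈ p.support, C (p.coeff m) *
      ((X 1 ^ b) ^ (m 1 / b) * (X 0 ^ a) ^ (m 0 / a)) := by
    conv_lhs => rw [← aeval_X_left_apply p, aeval_of_weighted X hρ hρ']
    rfl
  rw [hpX]
  apply Dvd.dvd.mul_left
  have hsplit : ∑ m ∈ p.support, (C (p.coeff m) : MvPolynomial (Fin 2) F) *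
      ((X 1 ^ b) ^ (m 1 / b) * (X 0 ^ a) ^ (m 0 / a)) =
      ∑ m ∈ p.support, C (p.coeff m) * (((X 1 ^ b) ^ (m 1 / b) - (C r * X 0 ^ a) ^ (m 1 / b)) *
        (X 0 ^ a) ^ (m 0 / a)) + C (∑ m ∈ p.support, p.coeff m * r ^ (m 1 / b)) *
          (X 0 ^ a) ^ K := by
    rw [map_sum, Finset.sum_mul, ← Finset.sum_add_distrib]
    refine Finset.sum_congr rfl fun m hm => ?_
    rw [← hsum m hm, C_mul, C_pow, pow_add, mul_pow (C r)]
    ring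
  rw [hsplit, hr0, C_0, zero_mul, add_zero]
  refine Finset.dvd_sum fun m _ => ?_
  exact ((sub_dvd_pow_sub_pow _ _ _).mul_right _).mul_left _

end Leading

/-! ### Elementary reduction of plane automorphisms -/

section Reduction

variable {F : Type*} [Field F]

lemma totalDegree_pow_eq {σ : Type*} {p : MvPolynomial σ F} (hp : p ≠ 0) (n : ℕ) :
    (p ^ n).totalDegree = n * p.totalDegree := by
  induction n with
  | zero => simp
  | succ n ih =>
    rw [pow_succ, totalDegree_mul_of_isDomain (pow_ne_zero _ hp) hp, ih]
    ring

/-- An automorphism of the plane given by two polynomials of degree at least two can be simplified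
by an elementary move: the larger leading form is a multiple of a power of the smaller one. -/
lemma exists_reduction (θ : MvPolynomial (Fin 2) F ≃ₐ[F] MvPolynomial (Fin 2) F)
    (h2 : 2 ≤ (θ (X 1)).totalDegree)
    (hle : (θ (X 1)).totalDegree ≤ (θ (X 0)).totalDegree) :
    ∃ (c : F) (n : ℕ), (θ (X 0) - C c * θ (X 1) ^ n).totalDegree < (θ (X 0)).totalDegree := by
  classical
  set g : Fin 2 → MvPolynomial (Fin 2) F := fun i => θ (X i) with hg
  have hgne : ∀ i, g i ≠ 0 := fun i => by
    rw [hg]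
    simp only [ne_eq, EmbeddingLike.map_eq_zero_iff]
    exact X_ne_zero i
  set f := θ.symm (X 0) with hf
  have hfne : f ≠ 0 := by
    rw [hf, map_ne_zero_iff _ θ.symm.injective]
    exact X_ne_zero 0
  have hgf : aeval g f = X 0 := by
    have : aeval g = θ.toAlgHom := by
      apply MvPolynomial.algHom_ext
      intro i
      simp [hg]
    rw [this]
    simp [hf]
  -- `f` is weighted by the degrees of the substituted polynomials, so its top form `fh` vanishes
  -- at their leading forms: the result of the substitution has degree one, less than `W n`
  set W : (Fin 2 →₀ ℕ) → ℕ := fun m => (g 0).totalDegree * m 0 + (g 1).totalDegree * m 1 with hW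
  have hweight : ∀ m : Fin 2 →₀ ℕ,
      Finsupp.weight (fun i => ((g i).totalDegree : ℚ)) m = (W m : ℚ) := by
    intro m
    simp [Finsupp.weight_eq_sum, Fin.sum_univ_two, hW]
    ring
  obtain ⟨n, hn, hmax⟩ := Finset.exists_max_image f.support W (by simpa using hfne)
  have hWB : WB (fun i => ((g i).totalDegree : ℚ)) (W n : ℚ) f := by
    intro m hm
    rw [hweight]
    exact_mod_cast hmax m (mem_support_iff.2 hm)
  have hWn : 2 ≤ W n := by
    by_contra hlt
    have hconst : f = C (f.coeff 0) := by
      ext m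
      rw [coeff_C]
      split_ifs with h0
      · rw [h0]
      · by_contra hm
        have h3 := hmax m (mem_support_iff.2 hm)
        have h4 : m 0 ≠ 0 ∨ m 1 ≠ 0 := by
          by_contra! h5
          apply h0
          ext l
          fin_cases l
          · exact h5.1.symm
          · exact h5.2.symm
        simp only [hW] at h3 hlt
        rcases h4 with h4 | h4
        · have := Nat.pos_of_ne_zero h4
          nlinarith
        · have := Nat.pos_of_ne_zero h4
          nlinarith
    have h3 := congrArg θ hconst
    rw [hf, AlgEquiv.apply_symm_apply, ← hf, ← algebraMap_eq, AlgEquiv.commutes, algebraMap_eq] at h3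
    have h4 := congrArg totalDegree h3
    rw [totalDegree_X, totalDegree_C] at h4
    omega
  set fh := weightedHomogeneousComponent (fun i => ((g i).totalDegree : ℚ)) (W n : ℚ) f with hfh
  have hfhm : ∀ m, fh.coeff m ≠ 0 → W m = W n := by
    intro m hm
    rw [hfh, coeff_weightedHomogeneousComponent, hweight] at hm
    split_ifs at hm with h
    · exact_mod_cast h
    · exact absurd rfl hm
  have hfhne : fh ≠ 0 := by
    intro h
    have := congrArg (coeff n) h
    rw [hfh, coeff_weightedHomogeneousComponent, if_pos (hweight n)] at this
    exact mem_support_iff.1 hn (by simpa using this)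
  have hz : aeval (fun i => top (g i)) fh = 0 := by
    have h := (WB.aeval (fun i => WB_totalDegree (g i)) hWB).2
    rw [hgf] at h
    refine h.symm.trans (comp_eq_zero_of_lt (a := ((X 0 : MvPolynomial (Fin 2) F).totalDegree : ℚ))
      (WB_totalDegree _) ?_)
    rw [totalDegree_X]
    exact_mod_cast hWn
  set E := (g 1).totalDegree with hE
  set E₂ := (g 0).totalDegree with hE₂
  obtain ⟨G, a, b, hGpos, hab, hEa, hEb⟩ := Nat.exists_coprime' (m := E) (n := E₂)
    (Nat.gcd_pos_of_pos_left _ (by omega))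
  have hab' : a ≤ b := by
    rw [hEa, hEb] at hle
    exact Nat.le_of_mul_le_mul_right hle hGpos
  have ha : 0 < a := by
    rcases Nat.eq_zero_or_pos a with rfl | h
    · simp at hEa; omega
    · exact h
  have hD : ∀ m, fh.coeff m ≠ 0 → a * m 1 + b * m 0 = a * n 1 + b * n 0 := by
    intro m hm
    have := hfhm m hm
    simp only [hW] at this
    rw [hEa, hEb] at this
    have h3 : G * (a * m 1 + b * m 0) = G * (a * n 1 + b * n 0) := by linarith
    exact Nat.eq_of_mul_eq_mul_left hGpos h3
  obtain ⟨r, hr, hprop, hdvd⟩ := exists_binomial_factor hfhne ha (by omega) hab hD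
    (fun i => top (g i)) (fun i => top_ne_zero (hgne i)) (by
      rw [totalDegree_pow_eq (top_ne_zero (hgne 1)), totalDegree_pow_eq (top_ne_zero (hgne 0)),
        totalDegree_top (hgne 1), totalDegree_top (hgne 0), ← hE, ← hE₂, hEa, hEb]
      ring) hz
  -- for `a = 1` the proportionality of leading forms is the required cancellation; for `a ≥ 2` a
  -- deformation fixing `fh` would fix its binomial factor, against the rigidity of that curve
  rcases Nat.lt_or_ge a 2 with ha2 | ha2
  · obtain rfl : a = 1 := by omega
    refine ⟨r⁻¹, b, ?_⟩
    have hbE : (b : ℚ) * E = E₂ := by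
      rw [hEa, hEb]; push_cast; ring
    obtain ⟨hp1, hp2⟩ := WB.pow (WB_totalDegree (g 1)) b
    rw [← hE, nsmul_eq_mul, hbE] at hp1 hp2
    have hCw : WB (fun _ => (1 : ℚ)) 0 (C (-r⁻¹) : MvPolynomial (Fin 2) F) := by
      have := WB_totalDegree (C (-r⁻¹) : MvPolynomial (Fin 2) F)
      rwa [totalDegree_C, Nat.cast_zero] at this
    have hq := hCw.mul hp1
    rw [zero_add] at hq
    have heq : θ (X 0) - C r⁻¹ * θ (X 1) ^ b = g 0 + C (-r⁻¹) * g 1 ^ b := by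
      simp only [hg, map_neg]; ring
    rw [heq]
    refine totalDegree_lt_of_comp_eq_zero (by omega) ((WB_totalDegree (g 0)).add hq) ?_
    rw [map_add, MvPolynomial.C_mul', map_smul, hp2]
    change top (g 0) + (-r⁻¹) • (top (g 1) ^ b) = 0
    rw [hprop, ← MvPolynomial.C_mul', ← mul_assoc, ← C_mul, neg_mul, inv_mul_cancel₀ hr]
    simp
  · exfalso
    obtain ⟨ψ, h0, hfix, k, hk⟩ := exists_degeneration _ θ.symm hWB
    have hP := fixed_of_dvd ψ.toRingHom h0 hfhne hfix hdvd
    have hP' : ψ (X 1) ^ b - Polynomial.C (C r) * ψ (X 0) ^ a =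
        Polynomial.C (X 1 ^ b - C r * X 0 ^ a) := by
      rw [← hP]
      have : ψ (C r) = Polynomial.C (C r) := by
        rw [← algebraMap_eq, AlgHom.commutes]; rfl
      simp [this]
    have := curve_const (i := 1) (j := 0) (by simp) ha2 (by omega) hab hr _ _ hP'
    fin_cases k
    · exact hk this.2
    · exact hk this.1

end Reduction

/-! ### Coordinate systems -/

section Coordinates

variable {F : Type*} [Field F] {A : Type*} [CommRing A] [Algebra F A]

lemma affine_of_totalDegree_le_one {p : MvPolynomial (Fin 2) F} (hp : p.totalDegree ≤ 1) :
    p = C (p.coeff 0) + C (p.coeff (Finsupp.single 0 1)) * X 0 +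
      C (p.coeff (Finsupp.single 1 1)) * X 1 := by
  ext m
  by_cases hm : p.coeff m = 0
  · rw [hm]
    simp only [coeff_add, coeff_C_mul, coeff_C, coeff_X]
    split_ifs with h1 h2 h3 h2 h3 h3 <;> simp_all
  · have h1 : m.degree ≤ 1 := (le_totalDegree (mem_support_iff.2 hm)).trans hp
    have h2 : m = 0 ∨ m = Finsupp.single 0 1 ∨ m = Finsupp.single 1 1 := by
      rw [Finsupp.degree_eq_sum, Fin.sum_univ_two] at h1
      have : m 0 = 0 ∧ m 1 = 0 ∨ m 0 = 1 ∧ m 1 = 0 ∨ m 0 = 0 ∧ m 1 = 1 := by omega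
      rcases this with h | h | h
      · left; ext l; fin_cases l <;> simp [h]
      · right; left; ext l; fin_cases l <;> simp [h]
      · right; right; ext l; fin_cases l <;> simp [h]
    rcases h2 with rfl | rfl | rfl <;>
      simp [coeff_C, coeff_X, Finsupp.single_left_inj, eq_comm (a := (0 : Fin 2 →₀ ℕ))]

lemma totalDegree_affine_le (a b c : F) :
    (C a + C b * X 0 + C c * X 1 : MvPolynomial (Fin 2) F).totalDegree ≤ 1 := by
  refine (totalDegree_add _ _).trans (max_le ((totalDegree_add _ _).trans (max_le ?_ ?_)) ?_)
  · simp
  · refine (totalDegree_mul _ _).trans ?_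
    simp
  · refine (totalDegree_mul _ _).trans ?_
    simp

lemma aeval_eq_coe (ρ : MvPolynomial (Fin 2) F ≃ₐ[F] MvPolynomial (Fin 2) F)
    (p : MvPolynomial (Fin 2) F) : aeval (fun i => ρ (X i)) p = ρ p := by
  have : aeval (fun i => ρ (X i)) = ρ.toAlgHom := by
    apply MvPolynomial.algHom_ext
    intro i
    simp
  rw [this]
  rfl

lemma totalDegree_affine_equiv (ρ : MvPolynomial (Fin 2) F ≃ₐ[F] MvPolynomial (Fin 2) F)
    (h : ∀ i, (ρ (X i)).totalDegree ≤ 1) (h' : ∀ i, (ρ.symm (X i)).totalDegree ≤ 1)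
    (p : MvPolynomial (Fin 2) F) : (ρ p).totalDegree = p.totalDegree := by
  apply le_antisymm
  · rw [← aeval_eq_coe ρ p]
    exact totalDegree_aeval_le h p
  · have := totalDegree_aeval_le h' (ρ p)
    rwa [aeval_eq_coe, AlgEquiv.symm_apply_apply] at this

/-- The triangular automorphism with `a X₀ + p(X₁) ↦ X₀` and `X₁ ↦ X₁`. -/
noncomputable def triangular (a : F) (ha : a ≠ 0) (p : Polynomial F) :
    MvPolynomial (Fin 2) F ≃ₐ[F] MvPolynomial (Fin 2) F :=
  AlgEquiv.ofAlgHom (aeval ![C a⁻¹ * (X 0 - Polynomial.aeval (X 1) p), X 1])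
    (aeval ![C a * X 0 + Polynomial.aeval (X 1) p, X 1])
    (by
      have hc : (C a : MvPolynomial (Fin 2) F) * C a⁻¹ = 1 := by
        rw [← C_mul, mul_inv_cancel₀ ha, C_1]
      apply MvPolynomial.algHom_ext
      intro i
      fin_cases i
      · simp [← Polynomial.aeval_algHom_apply]
        linear_combination (X 0 - Polynomial.aeval (X 1) p) * hc
      · simp)
    (by
      have hc : (C a : MvPolynomial (Fin 2) F) * C a⁻¹ = 1 := by
        rw [← C_mul, mul_inv_cancel₀ ha, C_1]
      apply MvPolynomial.algHom_ext
      intro i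
      fin_cases i
      · simp [← Polynomial.aeval_algHom_apply]
        linear_combination X 0 * hc
      · simp)

lemma triangular_X_one (a : F) (ha : a ≠ 0) (p : Polynomial F) :
    triangular a ha p (X 1) = X 1 := by
  simp [triangular]

lemma triangular_X_zero (a : F) (ha : a ≠ 0) (p : Polynomial F) :
    triangular a ha p (X 0) = C a⁻¹ * (X 0 - Polynomial.aeval (X 1) p) := by
  simp [triangular]

lemma triangular_symm_X_zero (a : F) (ha : a ≠ 0) (p : Polynomial F) :
    (triangular a ha p).symm (X 0) = C a * X 0 + Polynomial.aeval (X 1) p := by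
  simp [triangular]

lemma triangular_symm_X_one (a : F) (ha : a ≠ 0) (p : Polynomial F) :
    (triangular a ha p).symm (X 1) = X 1 := by
  simp [triangular]

/-- The exchange of the two variables. -/
noncomputable def swap : MvPolynomial (Fin 2) F ≃ₐ[F] MvPolynomial (Fin 2) F :=
  renameEquiv F (Equiv.swap 0 1)

lemma swap_X_zero : swap (X 0 : MvPolynomial (Fin 2) F) = X 1 := by simp [swap]

lemma swap_X_one : swap (X 1 : MvPolynomial (Fin 2) F) = X 0 := by simp [swap]

lemma totalDegree_swap (p : MvPolynomial (Fin 2) F) : (swap p).totalDegree = p.totalDegree :=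
  totalDegree_renameEquiv _ _

lemma totalDegree_triangular (a : F) (ha : a ≠ 0) (b c : F) (p : MvPolynomial (Fin 2) F) :
    (triangular a ha (Polynomial.C b * Polynomial.X + Polynomial.C c) p).totalDegree =
      p.totalDegree := by
  have hev : Polynomial.aeval (X 1 : MvPolynomial (Fin 2) F)
      (Polynomial.C b * Polynomial.X + Polynomial.C c) = C b * X 1 + C c := by
    simp [← algebraMap_eq]
  apply totalDegree_affine_equiv
  · intro i
    fin_cases i
    · change (triangular a ha _ (X 0)).totalDegree ≤ 1
      rw [triangular_X_zero, hev]
      convert totalDegree_affine_le (-(a⁻¹ * c)) a⁻¹ (-(a⁻¹ * b)) using 2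
      simp only [C_neg, C_mul]
      ring
    · change (triangular a ha _ (X 1)).totalDegree ≤ 1
      rw [triangular_X_one, totalDegree_X]
  · intro i
    fin_cases i
    · change ((triangular a ha _).symm (X 0)).totalDegree ≤ 1
      rw [triangular_symm_X_zero, hev]
      convert totalDegree_affine_le c a b using 2
      ring
    · change ((triangular a ha _).symm (X 1)).totalDegree ≤ 1
      rw [triangular_symm_X_one, totalDegree_X]

/-- Any element of degree one is the second coordinate of a system with the same degrees. -/
lemma exists_coord_of_degree_one (s : A ≃ₐ[F] MvPolynomial (Fin 2) F) {x : A}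
    (hx : (s x).totalDegree = 1) :
    ∃ s' : A ≃ₐ[F] MvPolynomial (Fin 2) F, s' x = X 1 ∧
      ∀ c, (s' c).totalDegree = (s c).totalDegree := by
  -- it suffices to treat an element involving the first variable
  have key : ∀ s : A ≃ₐ[F] MvPolynomial (Fin 2) F, (s x).totalDegree = 1 →
      (s x).coeff (Finsupp.single 0 1) ≠ 0 → ∃ s' : A ≃ₐ[F] MvPolynomial (Fin 2) F, s' x = X 1 ∧
      ∀ c, (s' c).totalDegree = (s c).totalDegree := by
    intro s hx h0
    refine ⟨(s.trans (triangular _ h0 (Polynomial.C ((s x).coeff (Finsupp.single 1 1)) *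
      Polynomial.X + Polynomial.C ((s x).coeff 0)))).trans swap, ?_, fun c => ?_⟩
    · change swap (triangular _ h0 _ (s x)) = X 1
      rw [← swap_X_zero, swap.injective.eq_iff, ← AlgEquiv.eq_symm_apply, triangular_symm_X_zero]
      conv_lhs => rw [affine_of_totalDegree_le_one hx.le]
      simp [← algebraMap_eq]
      ring
    · change (swap (triangular _ h0 _ (s c))).totalDegree = _
      rw [totalDegree_swap, totalDegree_triangular]
  by_cases h0 : (s x).coeff (Finsupp.single 0 1) = 0
  · have h1 : (s x).coeff (Finsupp.single 1 1) ≠ 0 := by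
      intro h1
      have := affine_of_totalDegree_le_one hx.le
      rw [h0, h1] at this
      rw [this] at hx
      simp at hx
    obtain ⟨s', h2, h3⟩ := key (s.trans swap) (by
        change (swap (s x)).totalDegree = 1
        rw [totalDegree_swap, hx]) (by
        change (swap (s x)).coeff _ ≠ 0
        have : (Finsupp.single 0 1 : Fin 2 →₀ ℕ) =
            Finsupp.mapDomain (Equiv.swap 0 1) (Finsupp.single 1 1) := by
          simp [Finsupp.mapDomain_single]
        rw [swap, renameEquiv_apply, this, coeff_rename_mapDomain _ (Equiv.injective _)]
        exact h1)
    exact ⟨s', h2, fun c => by rw [h3]; exact totalDegree_swap _⟩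
  · exact key s hx h0

/-- Two independent elements of degree one form a coordinate system with the same degrees. -/
lemma exists_coord_pair (s : A ≃ₐ[F] MvPolynomial (Fin 2) F) {x z : A}
    (hx : (s x).totalDegree = 1) (hz : (s z).totalDegree = 1)
    (hxz : ∀ b c : F, z ≠ algebraMap F A b * x + algebraMap F A c) :
    ∃ s' : A ≃ₐ[F] MvPolynomial (Fin 2) F, s' x = X 1 ∧ s' z = X 0 ∧
      ∀ c, (s' c).totalDegree = (s c).totalDegree := by
  obtain ⟨s₁, h1, hd⟩ := exists_coord_of_degree_one s hx
  rw [← hd] at hz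
  have haff := affine_of_totalDegree_le_one hz.le
  have h0 : (s₁ z).coeff (Finsupp.single 0 1) ≠ 0 := by
    intro h0
    rw [h0] at haff
    apply hxz ((s₁ z).coeff (Finsupp.single 1 1)) ((s₁ z).coeff 0)
    apply s₁.injective
    rw [map_add, map_mul, AlgEquiv.commutes, AlgEquiv.commutes, h1]
    conv_lhs => rw [haff]
    simp [algebraMap_eq]
    ring
  refine ⟨s₁.trans (triangular _ h0 (Polynomial.C ((s₁ z).coeff (Finsupp.single 1 1)) *
      Polynomial.X + Polynomial.C ((s₁ z).coeff 0))), ?_, ?_, fun c => ?_⟩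
  · change triangular _ h0 _ (s₁ x) = _
    rw [h1, triangular_X_one]
  · change triangular _ h0 _ (s₁ z) = _
    rw [← AlgEquiv.eq_symm_apply, triangular_symm_X_zero]
    conv_lhs => rw [haff]
    simp [← algebraMap_eq]
    ring
  · change (triangular _ h0 _ (s₁ c)).totalDegree = _
    rw [totalDegree_triangular, hd]

end Coordinates

/-! ### Convexity of degrees and coordinate systems of minimal size -/

section Convexity

variable {F : Type*} [Field F] {A : Type*} [CommRing A] [Algebra F A]

/-- A pure power in the leading form of `q` dominates after substitution, if it is a power of the
variable that receives the polynomial of larger degree. -/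
lemma totalDegree_aeval_of_pure_power {q : MvPolynomial (Fin 2) F}
    {g : Fin 2 → MvPolynomial (Fin 2) F} {i j : Fin 2} (hij : i ≠ j) (hg : ∀ l, g l ≠ 0)
    (hq : q.coeff (Finsupp.single i q.totalDegree) ≠ 0)
    (hlt : (g j).totalDegree < (g i).totalDegree) :
    (aeval g q).totalDegree = q.totalDegree * (g i).totalDegree := by
  have hw : ∀ m : Fin 2 →₀ ℕ, Finsupp.weight (fun l => (g l).totalDegree) m =
      m i * (g i).totalDegree + m j * (g j).totalDegree := by
    intro m
    rw [Finsupp.weight_eq_sum, Fin.sum_univ_two]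
    fin_cases i <;> fin_cases j <;> simp_all [add_comm]
  rw [totalDegree_aeval_of_dominant hg _ hq]
  · rw [hw]
    simp [hij]
  · intro m hm hne
    rw [hw, hw]
    have hdeg : m i + m j ≤ q.totalDegree := by
      refine le_trans (le_of_eq ?_) (le_totalDegree (mem_support_iff.2 hm))
      change _ = m.degree
      rw [Finsupp.degree_eq_sum, Fin.sum_univ_two]
      fin_cases i <;> fin_cases j <;> simp_all [add_comm]
    simp only [Finsupp.single_eq_same, Finsupp.single_eq_of_ne hij.symm, zero_mul, add_zero]
    rcases Nat.eq_zero_or_pos (m j) with h0 | h0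
    · have hmi : m i ≠ q.totalDegree := by
        intro h
        apply hne
        ext l
        have hl : l = i ∨ l = j := by omega
        rcases hl with rfl | rfl
        · simp [h]
        · simp [hij.symm, h0]
      have : m i < q.totalDegree := by omega
      rw [h0, zero_mul, add_zero]
      exact Nat.mul_lt_mul_of_pos_right this (by omega)
    · nlinarith

lemma transition (s t : A ≃ₐ[F] MvPolynomial (Fin 2) F) (c : A) :
    aeval (fun i => t (s.symm (X i))) (s c) = t c := by
  have := aeval_eq_coe (s.symm.trans t) (s c)
  simpa using this

lemma totalDegree_eq_zero_iff (s : A ≃ₐ[F] MvPolynomial (Fin 2) F) (c : A) :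
    (s c).totalDegree = 0 ↔ ∃ r, c = algebraMap F A r := by
  constructor
  · intro h
    rw [totalDegree_eq_zero_iff_eq_C] at h
    refine ⟨(s c).coeff 0, s.injective (h.trans ?_)⟩
    rw [AlgEquiv.commutes]
    rfl
  · rintro ⟨r, rfl⟩
    rw [AlgEquiv.commutes, algebraMap_eq, totalDegree_C]

lemma totalDegree_pos_of_pos (s t : A ≃ₐ[F] MvPolynomial (Fin 2) F) {c : A}
    (h : 0 < (s c).totalDegree) : 0 < (t c).totalDegree := by
  rw [Nat.pos_iff_ne_zero, ne_eq, totalDegree_eq_zero_iff] at h ⊢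
  exact h

/-- If the first coordinate of `s` is the dominant one in `t₁` and the second one is dominant in `t₂`,
then every variable has degree in `s` strictly smaller than the average of its degrees in `t₁` and
`t₂`: its leading form in `s` involves a pure power, which is multiplied by at least two in `t₁` or
in `t₂`. -/
lemma convexity (s t₁ t₂ u : A ≃ₐ[F] MvPolynomial (Fin 2) F)
    (h₁ : 2 ≤ (t₁ (s.symm (X 0))).totalDegree)
    (h₁' : (t₁ (s.symm (X 1))).totalDegree < (t₁ (s.symm (X 0))).totalDegree)
    (h₂ : 2 ≤ (t₂ (s.symm (X 1))).totalDegree)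
    (h₂' : (t₂ (s.symm (X 0))).totalDegree < (t₂ (s.symm (X 1))).totalDegree)
    {f : A} (hf : u f = X 0) :
    2 * (s f).totalDegree < (t₁ f).totalDegree + (t₂ f).totalDegree := by
  have hne : ∀ (t : A ≃ₐ[F] MvPolynomial (Fin 2) F) l, t (s.symm (X l)) ≠ 0 := by
    intro t l
    simp only [ne_eq, EmbeddingLike.map_eq_zero_iff]
    exact X_ne_zero l
  have hpos : ∀ t : A ≃ₐ[F] MvPolynomial (Fin 2) F, 0 < (t f).totalDegree := fun t =>
    totalDegree_pos_of_pos u t (by rw [hf, totalDegree_X]; exact one_pos)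
  have hsf : (u.symm.trans s) (X 0) = s f := by
    rw [← hf]
    simp
  obtain ⟨i, hi⟩ := exists_pure_power (u.symm.trans s)
  rw [hsf] at hi
  fin_cases i
  · have := totalDegree_aeval_of_pure_power (i := 0) (j := 1) (by simp) (hne t₁) hi h₁'
    rw [transition] at this
    have := hpos t₂
    nlinarith
  · have := totalDegree_aeval_of_pure_power (i := 1) (j := 0) (by simp) (hne t₂) hi h₂'
    rw [transition] at this
    have := hpos t₁
    nlinarith

/-- The total degree of a finite family of elements in a coordinate system. -/
noncomputable def size {ι : Type*} [Fintype ι] (f : ι → A)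
    (s : A ≃ₐ[F] MvPolynomial (Fin 2) F) : ℕ :=
  ∑ i, (s (f i)).totalDegree

/-- A coordinate system in which the family `f` has the least possible total degree. -/
def IsMinimal {ι : Type*} [Fintype ι] (f : ι → A)
    (s : A ≃ₐ[F] MvPolynomial (Fin 2) F) : Prop :=
  ∀ t : A ≃ₐ[F] MvPolynomial (Fin 2) F, size f s ≤ size f t

variable {ι : Type*} [Fintype ι] [Nonempty ι] {f : ι → A}

lemma convexity_minimal (hf : ∀ i, ∃ u : A ≃ₐ[F] MvPolynomial (Fin 2) F, u (f i) = X 0)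
    {s t₁ t₂ : A ≃ₐ[F] MvPolynomial (Fin 2) F} (ht₁ : IsMinimal f t₁) (ht₂ : IsMinimal f t₂)
    (h₁ : 2 ≤ (t₁ (s.symm (X 0))).totalDegree)
    (h₁' : (t₁ (s.symm (X 1))).totalDegree < (t₁ (s.symm (X 0))).totalDegree)
    (h₂ : 2 ≤ (t₂ (s.symm (X 1))).totalDegree)
    (h₂' : (t₂ (s.symm (X 0))).totalDegree < (t₂ (s.symm (X 1))).totalDegree) : False := by
  have h : 2 * size f s < size f t₁ + size f t₂ := by
    rw [size, size, size, Finset.mul_sum, ← Finset.sum_add_distrib]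
    apply Finset.sum_lt_sum_of_nonempty Finset.univ_nonempty
    intro i _
    obtain ⟨u, hu⟩ := hf i
    exact convexity s t₁ t₂ u h₁ h₁' h₂ h₂' hu
  have := ht₁ s
  have := ht₂ s
  omega

/-- Two minimal coordinate systems share an element of degree one. Otherwise, choose `x` of degree one
in `s` with least degree in `t`, and complete it by `y` with least degree in `t`. By
`exists_reduction` the degree of `y` in `t` is less than that of `x`, and then the system `(y, x)`
contradicts convexity between `s` and `t`. -/
lemma exists_common (hf : ∀ i, ∃ u : A ≃ₐ[F] MvPolynomial (Fin 2) F, u (f i) = X 0)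
    {s t : A ≃ₐ[F] MvPolynomial (Fin 2) F} (hs : IsMinimal f s) (ht : IsMinimal f t) :
    ∃ c, (s c).totalDegree = 1 ∧ (t c).totalDegree = 1 := by
  by_contra! hno
  obtain ⟨x, hx, hxmin⟩ := exists_minimalFor_of_wellFoundedLT
    (fun x => (s x).totalDegree = 1) (fun x => (t x).totalDegree)
    ⟨s.symm (X 1), by simp⟩
  replace hxmin : ∀ z, (s z).totalDegree = 1 → (t x).totalDegree ≤ (t z).totalDegree := by
    intro z hz
    by_contra hlt
    exact hlt (hxmin hz (by simp only; omega))
  obtain ⟨s₁, hs₁, -⟩ := exists_coord_of_degree_one s hx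
  obtain ⟨s', hs', hmin⟩ := exists_minimalFor_of_wellFoundedLT
    (fun s' : A ≃ₐ[F] MvPolynomial (Fin 2) F => s' x = X 1)
    (fun s' => (t (s'.symm (X 0))).totalDegree) ⟨s₁, hs₁⟩
  replace hmin : ∀ s₂ : A ≃ₐ[F] MvPolynomial (Fin 2) F, s₂ x = X 1 →
      (t (s'.symm (X 0))).totalDegree ≤ (t (s₂.symm (X 0))).totalDegree := by
    intro s₂ hs₂
    by_contra hlt
    exact hlt (hmin hs₂ (by simp only; omega))
  have hx' : s'.symm (X 1) = x := by rw [← hs']; simp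
  have htx : 2 ≤ (t x).totalDegree := by
    have h1 := hno x hx
    have h2 := totalDegree_pos_of_pos s t (c := x) (by omega)
    omega
  have hlt : (t (s'.symm (X 0))).totalDegree < (t x).totalDegree := by
    by_contra hge
    push Not at hge
    obtain ⟨c, n, hcn⟩ := exists_reduction (s'.symm.trans t) (by simpa [hx'] using htx)
      (by simpa [hx'] using hge)
    have h1 := hmin (s'.trans (triangular 1 one_ne_zero
      (-(Polynomial.C c * Polynomial.X ^ n)))) (by
        change triangular 1 one_ne_zero _ (s' x) = _
        rw [hs', triangular_X_one])
    have h2 : (s'.trans (triangular 1 one_ne_zero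
        (-(Polynomial.C c * Polynomial.X ^ n)))).symm (X 0) =
        s'.symm (X 0 - C c * X 1 ^ n) := by
      change s'.symm ((triangular 1 one_ne_zero _).symm (X 0)) = _
      rw [triangular_symm_X_zero, C_1, one_mul]
      simp [← algebraMap_eq, sub_eq_add_neg]
    rw [h2] at h1
    have h3 : t (s'.symm (X 0 - C c * X 1 ^ n)) =
        (s'.symm.trans t) (X 0) - C c * (s'.symm.trans t) (X 1) ^ n := by
      change (s'.symm.trans t) _ = _
      rw [map_sub, map_mul, map_pow, ← algebraMap_eq, AlgEquiv.commutes]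
    rw [h3] at h1
    exact absurd hcn (by simpa using h1)
  have hsy : 2 ≤ (s (s'.symm (X 0))).totalDegree := by
    have h1 := totalDegree_pos_of_pos s' s (c := s'.symm (X 0)) (by simp)
    have h2 : (s (s'.symm (X 0))).totalDegree ≠ 1 := fun h => by
      have := hxmin _ h
      omega
    omega
  exact convexity_minimal hf hs ht (s := s') hsy (by rw [hx', hx]; omega) (by rwa [hx'])
    (by rwa [hx'])

/-- All minimal coordinate systems share an element of degree one. Unless all of them are affinely
equivalent, take the element `x` common to `s` and an inequivalent `t₀`; if it has degree at least
two in another system `τ`, convexity between `t₀` and `τ` fails at the system `(z, x)`, where `z` is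
common to `s` and `τ`. -/
lemma exists_common_all (hf : ∀ i, ∃ u : A ≃ₐ[F] MvPolynomial (Fin 2) F, u (f i) = X 0)
    {s : A ≃ₐ[F] MvPolynomial (Fin 2) F} (hs : IsMinimal f s) :
    ∃ x, ∀ t : A ≃ₐ[F] MvPolynomial (Fin 2) F, IsMinimal f t → (t x).totalDegree = 1 := by
  by_cases hall : ∀ t : A ≃ₐ[F] MvPolynomial (Fin 2) F, IsMinimal f t →
      ∀ c, (s c).totalDegree ≤ 1 → (t c).totalDegree ≤ 1
  · refine ⟨s.symm (X 1), fun t ht => ?_⟩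
    have h1 := hall t ht (s.symm (X 1)) (by simp)
    have h2 := totalDegree_pos_of_pos s t (c := s.symm (X 1)) (by simp)
    omega
  · push Not at hall
    obtain ⟨t₀, ht₀, c, hsc, hc⟩ := hall
    obtain ⟨x, hsx, hx⟩ := exists_common hf hs ht₀
    refine ⟨x, fun τ hτ => ?_⟩
    by_contra hτx
    obtain ⟨z, hsz, hz⟩ := exists_common hf hs hτ
    have hτx2 : 2 ≤ (τ x).totalDegree := by
      have := totalDegree_pos_of_pos s τ (c := x) (by omega)
      omega
    have hind : ∀ b c : F, z ≠ algebraMap F A b * x + algebraMap F A c := by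
      rintro b c rfl
      by_cases hb : b = 0
      · subst hb
        rw [(totalDegree_eq_zero_iff τ _).2 ⟨c, by simp⟩] at hz
        omega
      · have hxz : x = algebraMap F A b⁻¹ * (algebraMap F A b * x + algebraMap F A c) +
            algebraMap F A (-(b⁻¹ * c)) := by
          have : algebraMap F A b⁻¹ * algebraMap F A b = 1 := by
            rw [← map_mul, inv_mul_cancel₀ hb, map_one]
          simp only [map_neg, map_mul]
          linear_combination (-x) * this
        have : (τ x).totalDegree ≤ 1 := by
          rw [hxz, map_add, map_mul, AlgEquiv.commutes, AlgEquiv.commutes]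
          refine (totalDegree_add _ _).trans (max_le ((totalDegree_mul _ _).trans ?_) ?_)
          · rw [algebraMap_eq, totalDegree_C, hz]
          · rw [algebraMap_eq, totalDegree_C]
            omega
        omega
    obtain ⟨s', h1, h0, hdeg⟩ := exists_coord_pair s hsx hsz hind
    have hx' : s'.symm (X 1) = x := by rw [← h1]; simp
    have hz' : s'.symm (X 0) = z := by rw [← h0]; simp
    have htz : 2 ≤ (t₀ z).totalDegree := by
      by_contra hlt
      have h3 := totalDegree_aeval_le (g := fun i => t₀ (s'.symm (X i))) (by
        intro i
        fin_cases i
        · change (t₀ (s'.symm (X 0))).totalDegree ≤ 1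
          rw [hz']; omega
        · change (t₀ (s'.symm (X 1))).totalDegree ≤ 1
          rw [hx']; omega) (s' c)
      rw [transition, hdeg] at h3
      omega
    exact convexity_minimal hf ht₀ hτ (s := s') (by rwa [hz']) (by rw [hx', hz']; omega)
      (by rwa [hx']) (by rw [hx', hz']; omega)

end Convexity

/-! ### Automorphisms fixing a variable -/

section Triangular

variable {F : Type*} [Field F]

lemma exists_aeval_X (v : MvPolynomial (Fin 1) F) :
    ∃ p : Polynomial F, Polynomial.aeval (X 0 : MvPolynomial (Fin 1) F) p = v := by
  induction v using MvPolynomial.induction_on with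
  | C a => exact ⟨Polynomial.C a, by simp [algebraMap_eq]⟩
  | add p q hp hq =>
    obtain ⟨p', rfl⟩ := hp
    obtain ⟨q', rfl⟩ := hq
    exact ⟨p' + q', map_add _ _ _⟩
  | mul_X p i hp =>
    obtain ⟨p', rfl⟩ := hp
    obtain rfl : i = 0 := Subsingleton.elim _ _
    exact ⟨p' * Polynomial.X, by simp⟩

/-- An automorphism fixing one variable is affine in the other one, with constant leading
coefficient. -/
lemma exists_triangular (ρ : MvPolynomial (Fin 2) F ≃ₐ[F] MvPolynomial (Fin 2) F)
    (hρ : ρ (X 1) = X 1) :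
    ∃ (a : F) (p : Polynomial F), ρ (X 0) = C a * X 0 + Polynomial.aeval (X 1) p := by
  let Φ := finSuccEquiv F 1
  have hΦ0 : Φ (X 0) = Polynomial.X := finSuccEquiv_X_zero
  have hΦ1 : Φ (X 1) = Polynomial.C (X 0) := finSuccEquiv_X_succ (j := 0)
  -- over `F[X 1]`, the automorphism is a substitution `X 0 ↦ y`, so `y` is invertible for composition
  let y := Φ (ρ (X 0))
  let comp : MvPolynomial (Fin 2) F →ₐ[F] Polynomial (MvPolynomial (Fin 1) F) :=
    ((Polynomial.aeval (R := MvPolynomial (Fin 1) F) y).restrictScalars F).comp Φ.toAlgHom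
  have hcomp : comp = Φ.toAlgHom.comp ρ.toAlgHom := by
    apply MvPolynomial.algHom_ext
    intro i
    fin_cases i
    · change Polynomial.aeval y (Φ (X 0)) = Φ (ρ (X 0))
      rw [hΦ0, Polynomial.aeval_X]
    · change Polynomial.aeval y (Φ (X 1)) = Φ (ρ (X 1))
      rw [hρ, hΦ1, Polynomial.aeval_C]
      rfl
  have hq : (Φ (ρ.symm (X 0))).comp y = Polynomial.X := by
    have := DFunLike.congr_fun hcomp (ρ.symm (X 0))
    change Polynomial.aeval y (Φ (ρ.symm (X 0))) = Φ (ρ (ρ.symm (X 0))) at this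
    rw [AlgEquiv.apply_symm_apply, hΦ0] at this
    exact this
  set q := Φ (ρ.symm (X 0)) with hqdef
  have hdeg := congrArg Polynomial.natDegree hq
  rw [Polynomial.natDegree_comp, Polynomial.natDegree_X] at hdeg
  have hq1 : q.natDegree = 1 := Nat.eq_one_of_mul_eq_one_right hdeg
  have hy1 : y.natDegree = 1 := Nat.eq_one_of_mul_eq_one_left hdeg
  have hyform := Polynomial.eq_X_add_C_of_natDegree_le_one hy1.le
  have hqform := Polynomial.eq_X_add_C_of_natDegree_le_one hq1.le
  have hunit : IsUnit (y.coeff 1) := by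
    have h1 := congrArg (fun r => Polynomial.coeff r 1) hq
    rw [hqform, hyform] at h1
    simp only [Polynomial.add_comp, Polynomial.mul_comp, Polynomial.C_comp, Polynomial.X_comp,
      Polynomial.coeff_add, Polynomial.coeff_C_mul, Polynomial.coeff_X_one, mul_one,
      Polynomial.coeff_C_succ, add_zero] at h1
    exact IsUnit.of_mul_eq_one (q.coeff 1) (by rw [mul_comm]; exact h1)
  obtain ⟨a, -, ha⟩ := (isUnit_iff_eq_C_of_isReduced).1 hunit
  obtain ⟨p, hp⟩ := exists_aeval_X (y.coeff 0)
  refine ⟨a, p, Φ.injective ?_⟩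
  change y = _
  rw [hyform, ha, map_add, map_mul, hΦ0]
  have h1 : Φ (C a) = Polynomial.C (C a) := by
    rw [← algebraMap_eq, AlgEquiv.commutes]; rfl
  have h2 : Φ (Polynomial.aeval (X 1) p) = Polynomial.C (y.coeff 0) := by
    rw [← hp, ← AlgEquiv.coe_toAlgHom, ← Polynomial.aeval_algHom_apply, AlgEquiv.coe_toAlgHom, hΦ1]
    exact Polynomial.aeval_algHom_apply
      (IsScalarTower.toAlgHom F (MvPolynomial (Fin 1) F) (Polynomial (MvPolynomial (Fin 1) F)))
      (X 0) p
  rw [h1, h2]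

end Triangular

/-! ### Galois descent -/

section Descent

variable {K K' B : Type*} [Field K] [Field K'] [Algebra K K'] [CommRing B] [Algebra K B]

/-- The action of the Galois group on `K' ⊗ B` through the first factor. -/
noncomputable def act (σ : K' ≃ₐ[K] K') : (K' ⊗[K] B) ≃ₐ[K] (K' ⊗[K] B) :=
  Algebra.TensorProduct.congr σ AlgEquiv.refl

@[simp] lemma act_tmul (σ : K' ≃ₐ[K] K') (a : K') (b : B) :
    act σ (a ⊗ₜ[K] b) = σ a ⊗ₜ[K] b := by
  simp [act]

lemma act_act (σ τ : K' ≃ₐ[K] K') (c : K' ⊗[K] B) : act σ (act τ c) = act (σ * τ) c := by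
  induction c with
  | zero => simp
  | tmul a b => simp
  | add x y hx hy => simp [hx, hy]

lemma act_smul (σ : K' ≃ₐ[K] K') (r : K') (c : K' ⊗[K] B) :
    act σ (r • c) = σ r • act σ c := by
  rw [Algebra.smul_def, Algebra.smul_def, map_mul]
  congr 1

lemma act_one (c : K' ⊗[K] B) : act (1 : K' ≃ₐ[K] K') c = c := by
  induction c with
  | zero => simp
  | tmul a b => simp
  | add x y hx hy => simp [hx, hy]

lemma totalDegree_map_equiv {σ R S : Type*} [CommRing R] [CommRing S] (f : R →+* S)
    (hf : Function.Injective f) (p : MvPolynomial σ R) :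
    (MvPolynomial.map f p).totalDegree = p.totalDegree := by
  rw [totalDegree, totalDegree, support_map_of_injective _ hf]

/-- The Galois conjugate of a coordinate system. -/
lemma exists_conj (σ : K' ≃ₐ[K] K') (s : (K' ⊗[K] B) ≃ₐ[K'] MvPolynomial (Fin 2) K') :
    ∃ s' : (K' ⊗[K] B) ≃ₐ[K'] MvPolynomial (Fin 2) K',
      ∀ c, s' (act σ c) = MvPolynomial.map σ.toRingEquiv.toRingHom (s c) := by
  refine ⟨AlgEquiv.ofRingEquiv (f := (act σ).symm.toRingEquiv.trans
    (s.toRingEquiv.trans (mapEquiv (Fin 2) σ.toRingEquiv))) ?_, ?_⟩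
  · intro r
    change MvPolynomial.map σ.toRingEquiv.toRingHom (s ((act σ).symm _)) = _
    have : (act σ).symm (algebraMap K' (K' ⊗[K] B) r) = algebraMap K' (K' ⊗[K] B) (σ.symm r) := by
      rw [AlgEquiv.symm_apply_eq, Algebra.TensorProduct.algebraMap_apply,
        Algebra.TensorProduct.algebraMap_apply]
      simp
    rw [this, AlgEquiv.commutes, algebraMap_eq, map_C]
    simp
  · intro c
    change MvPolynomial.map σ.toRingEquiv.toRingHom (s ((act σ).symm (act σ c))) = _
    rw [AlgEquiv.symm_apply_apply]

variable [FiniteDimensional K K'] [IsGalois K K']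

lemma trace_mem (c : K' ⊗[K] B) : ∃ b : B, ∑ σ : K' ≃ₐ[K] K', act σ c = 1 ⊗ₜ[K] b := by
  induction c with
  | zero => exact ⟨0, by simp⟩
  | tmul a b =>
    refine ⟨Algebra.trace K K' a • b, ?_⟩
    simp only [act_tmul]
    rw [← TensorProduct.sum_tmul, ← trace_eq_sum_automorphisms, TensorProduct.tmul_smul,
      TensorProduct.smul_tmul', Algebra.algebraMap_eq_smul_one]
  | add x y hx hy =>
    obtain ⟨b, hb⟩ := hx
    obtain ⟨b', hb'⟩ := hy
    refine ⟨b + b', ?_⟩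
    simp only [map_add, Finset.sum_add_distrib, hb, hb', TensorProduct.tmul_add]

/-- A Galois-stable subspace not contained in `N` has an invariant element outside of `N`: by
independence of characters, the traces of the multiples of `m` cannot all lie in `N`. -/
lemma exists_invariant (M N : Submodule K' (K' ⊗[K] B))
    (hM : ∀ (σ : K' ≃ₐ[K] K'), ∀ c ∈ M, act σ c ∈ M) {m : K' ⊗[K] B} (hm : m ∈ M) (hN : m ∉ N) :
    ∃ b : B, (1 : K') ⊗ₜ[K] b ∈ M ∧ (1 : K') ⊗ₜ[K] b ∉ N := by
  by_contra! hall
  obtain ⟨f, hf, hfN⟩ := Submodule.exists_le_ker_of_notMem hN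
  have hzero : ∀ r : K', ∑ σ : K' ≃ₐ[K] K', f (act σ m) * σ r = 0 := by
    intro r
    obtain ⟨b, hb⟩ := trace_mem (r • m)
    have h1 : (1 : K') ⊗ₜ[K] b ∈ M := by
      rw [← hb]
      exact Submodule.sum_mem _ fun σ _ => hM σ _ (M.smul_mem r hm)
    have h2 := hfN (hall b h1)
    rw [LinearMap.mem_ker, ← hb, map_sum] at h2
    rw [← h2]
    refine Finset.sum_congr rfl fun σ _ => ?_
    rw [act_smul, map_smul, smul_eq_mul, mul_comm]
  have hli := (linearIndependent_monoidHom K' K').comp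
    (fun σ : K' ≃ₐ[K] K' => (σ.toRingEquiv.toRingHom : K' →* K')) (by
      intro σ τ h
      ext x
      exact DFunLike.congr_fun h x)
  rw [Fintype.linearIndependent_iff] at hli
  have := hli (fun σ => f (act σ m)) (by
    ext r
    simpa using hzero r) 1
  simp only [act_one] at this
  exact hf this

end Descent

/-! ### Separable forms of the affine plane over a field -/

section Forms

variable {K K' B : Type*} [Field K] [Field K'] [Algebra K K'] [CommRing B] [Algebra K B]

lemma totalDegree_conj {σ : K' ≃ₐ[K] K'} {s s' : (K' ⊗[K] B) ≃ₐ[K'] MvPolynomial (Fin 2) K'}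
    (h : ∀ c, s' (act σ c) = MvPolynomial.map σ.toRingEquiv.toRingHom (s c)) (c : K' ⊗[K] B) :
    (s' (act σ c)).totalDegree = (s c).totalDegree := by
  rw [h, totalDegree_map_equiv _ σ.injective]

variable [FiniteDimensional K K']

lemma isMinimal_conj {σ : K' ≃ₐ[K] K'} {s s' : (K' ⊗[K] B) ≃ₐ[K'] MvPolynomial (Fin 2) K'}
    (h : ∀ c, s' (act σ c) = MvPolynomial.map σ.toRingEquiv.toRingHom (s c)) {z : K' ⊗[K] B}
    (hs : IsMinimal (fun τ : K' ≃ₐ[K] K' => act τ z) s) :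
    IsMinimal (fun τ : K' ≃ₐ[K] K' => act τ z) s' := by
  have : size (fun τ : K' ≃ₐ[K] K' => act τ z) s' = size (fun τ : K' ≃ₐ[K] K' => act τ z) s := by
    rw [size, size]
    refine (Fintype.sum_equiv (Equiv.mulLeft σ) _ _ fun τ => ?_).symm
    rw [← totalDegree_conj h, act_act]
    rfl
  intro t
  rw [this]
  exact hs t

/-- Elements of degree at most one in every coordinate system that is minimal for the conjugates
of `z`. -/
def lowDegree (z : K' ⊗[K] B) : Submodule K' (K' ⊗[K] B) where
  carrier := {c | ∀ t : (K' ⊗[K] B) ≃ₐ[K'] MvPolynomial (Fin 2) K',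
    IsMinimal (fun τ : K' ≃ₐ[K] K' => act τ z) t → (t c).totalDegree ≤ 1}
  zero_mem' := fun t _ => by simp
  add_mem' := fun {a b} ha hb t ht => by
    rw [map_add]
    exact (totalDegree_add _ _).trans (max_le (ha t ht) (hb t ht))
  smul_mem' := fun r c hc t ht => by
    rw [map_smul]
    exact (totalDegree_smul_le _ _).trans (hc t ht)

lemma act_mem_lowDegree (z : K' ⊗[K] B) (σ : K' ≃ₐ[K] K') {c : K' ⊗[K] B}
    (hc : c ∈ lowDegree z) : act σ c ∈ lowDegree z := by
  intro t ht
  obtain ⟨t', ht'⟩ := exists_conj σ⁻¹ t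
  have h1 := hc t' (isMinimal_conj ht' ht)
  have h2 := totalDegree_conj ht' (act σ c)
  rw [act_act, inv_mul_cancel, act_one] at h2
  rwa [← h2]

/-- Some element of `B` is a variable over `K'`: the elements of degree at most one in all coordinate
systems minimal for the conjugates of one variable form a Galois-stable space with nonconstant
elements. -/
lemma exists_coord_one [IsGalois K K'] (s₀ : (K' ⊗[K] B) ≃ₐ[K'] MvPolynomial (Fin 2) K') :
    ∃ (b : B) (s : (K' ⊗[K] B) ≃ₐ[K'] MvPolynomial (Fin 2) K'), s (1 ⊗ₜ[K] b) = X 1 := by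
  let z := s₀.symm (X 0)
  have hvar : ∀ σ : K' ≃ₐ[K] K', ∃ u : (K' ⊗[K] B) ≃ₐ[K'] MvPolynomial (Fin 2) K',
      u (act σ z) = X 0 := by
    intro σ
    obtain ⟨u, hu⟩ := exists_conj σ s₀
    exact ⟨u, by rw [hu, AlgEquiv.apply_symm_apply, map_X]⟩
  obtain ⟨s, hs⟩ : ∃ s, IsMinimal (fun τ : K' ≃ₐ[K] K' => act τ z) s := by
    obtain ⟨s, -, hs⟩ := exists_minimalFor_of_wellFoundedLT (fun _ => True)
      (size (F := K') (fun τ : K' ≃ₐ[K] K' => act τ z)) ⟨s₀, trivial⟩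
    exact ⟨s, fun t => (le_total _ _).elim id (hs trivial)⟩
  obtain ⟨x, hx⟩ := exists_common_all hvar hs
  obtain ⟨b, hb, hb'⟩ := exists_invariant (lowDegree z) (1 : Submodule K' (K' ⊗[K] B))
    (fun σ c hc => act_mem_lowDegree z σ hc) (m := x) (fun t ht => (hx t ht).le) (by
      intro hmem
      obtain ⟨r, hr⟩ := Submodule.mem_one.1 hmem
      have := (totalDegree_eq_zero_iff s x).2 ⟨r, hr.symm⟩
      rw [hx s hs] at this
      exact one_ne_zero this)
  have hdeg : (s (1 ⊗ₜ[K] b)).totalDegree = 1 := by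
    refine le_antisymm (hb s hs) (Nat.one_le_iff_ne_zero.2 fun h0 => hb' ?_)
    obtain ⟨r, hr⟩ := (totalDegree_eq_zero_iff s _).1 h0
    exact Submodule.mem_one.2 ⟨r, hr.symm⟩
  obtain ⟨s', hs', -⟩ := exists_coord_of_degree_one s hdeg
  exact ⟨b, s', hs'⟩

/-- A variable in `B` is completed to a pair of coordinates in `B`: the polynomials
`a X₀ + p(X₁)` form a Galois-stable space, as automorphisms fixing `X₁` are triangular. -/
lemma exists_coord_pair_descended [IsGalois K K'] (s₀ : (K' ⊗[K] B) ≃ₐ[K'] MvPolynomial (Fin 2) K') :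
    ∃ (b₀ b₁ : B) (s : (K' ⊗[K] B) ≃ₐ[K'] MvPolynomial (Fin 2) K'),
      s (1 ⊗ₜ[K] b₀) = X 0 ∧ s (1 ⊗ₜ[K] b₁) = X 1 := by
  obtain ⟨b₁, s, hs⟩ := exists_coord_one s₀
  let P : Submodule K' (MvPolynomial (Fin 2) K') :=
    LinearMap.range (Polynomial.aeval (R := K') (X 1 : MvPolynomial (Fin 2) K')).toLinearMap
  let N := P.comap s.toLinearMap
  let M := (P ⊔ Submodule.span K' {X 0}).comap s.toLinearMap
  have memN : ∀ c, c ∈ N ↔ ∃ p : Polynomial K', s c = Polynomial.aeval (X 1) p := by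
    intro c
    exact ⟨fun ⟨p, hp⟩ => ⟨p, hp.symm⟩, fun ⟨p, hp⟩ => ⟨p, hp.symm⟩⟩
  have memM : ∀ c, c ∈ M ↔ ∃ (a : K') (p : Polynomial K'),
      s c = C a * X 0 + Polynomial.aeval (X 1) p := by
    intro c
    constructor
    · intro hc
      obtain ⟨_, ⟨p, rfl⟩, _, hw, h⟩ := Submodule.mem_sup.1 hc
      obtain ⟨a, rfl⟩ := Submodule.mem_span_singleton.1 hw
      refine ⟨a, p, ?_⟩
      rw [← smul_eq_C_mul, add_comm]
      exact h.symm
    · rintro ⟨a, p, h⟩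
      refine Submodule.mem_sup.2 ⟨_, ⟨p, rfl⟩, _, Submodule.mem_span_singleton.2 ⟨a, rfl⟩, ?_⟩
      rw [smul_eq_C_mul, add_comm]
      exact h.symm
  have hstable : ∀ (σ : K' ≃ₐ[K] K'), ∀ c ∈ M, act σ c ∈ M := by
    intro σ c hc
    obtain ⟨a, p, h⟩ := (memM c).1 hc
    obtain ⟨s', hs'⟩ := exists_conj σ s
    have h1 : s' (1 ⊗ₜ[K] b₁) = X 1 := by
      have := hs' (1 ⊗ₜ[K] b₁)
      rwa [act_tmul, map_one, hs, map_X] at this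
    let ρ := s'.symm.trans s
    have hρ : ρ (X 1) = X 1 := by
      change s (s'.symm (X 1)) = X 1
      rw [(s'.symm_apply_eq).2 h1.symm, hs]
    obtain ⟨a', p', h'⟩ := exists_triangular ρ hρ
    have h2 : s (act σ c) = ρ (s' (act σ c)) := by
      change _ = s (s'.symm _)
      rw [AlgEquiv.symm_apply_apply]
    have h3 : MvPolynomial.map σ.toRingEquiv.toRingHom (Polynomial.aeval (X 1) p) =
        Polynomial.aeval (X 1 : MvPolynomial (Fin 2) K')
          (p.map σ.toRingEquiv.toRingHom) := by
      rw [Polynomial.aeval_def, Polynomial.hom_eval₂, Polynomial.aeval_def, Polynomial.eval₂_map,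
        map_X]
      congr 1
      ext x : 1
      simp [algebraMap_eq]
    have h4 : ∀ q : Polynomial K', ρ (Polynomial.aeval (X 1) q) = Polynomial.aeval (X 1) q := by
      intro q
      rw [← AlgEquiv.coe_toAlgHom, ← Polynomial.aeval_algHom_apply, AlgEquiv.coe_toAlgHom, hρ]
    refine (memM _).2 ⟨σ a * a', Polynomial.C (σ a) * p' + p.map σ.toRingEquiv.toRingHom, ?_⟩
    have h5 : ρ (C (σ a)) = C (σ a) := by rw [← algebraMap_eq, AlgEquiv.commutes]
    rw [h2, hs', h, map_add, map_mul, map_C, map_X, h3, map_add, h4, map_mul, h', map_add,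
      map_mul (Polynomial.aeval _), Polynomial.aeval_C, algebraMap_eq, C_mul]
    change ρ (C (σ a)) * _ + _ = _
    rw [h5]
    ring
  obtain ⟨b₀, hM, hN⟩ := exists_invariant M N hstable (m := s.symm (X 0))
    ((memM _).2 ⟨1, 0, by simp⟩) (by
      intro hmem
      obtain ⟨p, hp⟩ := (memN _).1 hmem
      rw [AlgEquiv.apply_symm_apply] at hp
      have hev : ∀ v : Fin 2 → K', v 0 = Polynomial.aeval (v 1) p := by
        intro v
        have := congrArg (aeval v) hp
        rwa [← Polynomial.aeval_algHom_apply, aeval_X, aeval_X] at this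
      have h0 := hev ![0, 0]
      have h1 := hev ![1, 0]
      simp only [Matrix.cons_val_zero, Matrix.cons_val_one] at h0 h1
      exact zero_ne_one (h0.trans h1.symm))
  obtain ⟨a, p, h⟩ := (memM _).1 hM
  have ha : a ≠ 0 := by
    rintro rfl
    exact hN ((memN _).2 ⟨p, by simpa using h⟩)
  refine ⟨b₀, b₁, s.trans (triangular a ha p), ?_, ?_⟩
  · change triangular a ha p (s _) = _
    rw [h, ← triangular_symm_X_zero a ha p, AlgEquiv.apply_symm_apply]
  · change triangular a ha p (s _) = _
    rw [hs, triangular_X_one]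

/-- An algebra over a field which becomes a polynomial ring in two variables over a finite Galois
extension is a polynomial ring in two variables. -/
theorem nonempty_algEquiv_of_galois [IsGalois K K'] (s₀ : (K' ⊗[K] B) ≃ₐ[K'] MvPolynomial (Fin 2) K') :
    Nonempty (B ≃ₐ[K] MvPolynomial (Fin 2) K) := by
  obtain ⟨b₀, b₁, s, h₀, h₁⟩ := exists_coord_pair_descended s₀
  let φ : MvPolynomial (Fin 2) K →ₐ[K] B := aeval ![b₀, b₁]
  have hcomp : s.toAlgHom.comp (Algebra.TensorProduct.map (AlgHom.id K' K') φ) =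
      (algebraTensorAlgEquiv (σ := Fin 2) K K').toAlgHom := by
    ext i
    fin_cases i
    · simp [φ, h₀]
    · simp [φ, h₁]
  have hbij : Function.Bijective (φ.toLinearMap.lTensor K') := by
    have h : ∀ x, φ.toLinearMap.lTensor K' x =
        s.symm (algebraTensorAlgEquiv (σ := Fin 2) K K' x) := by
      intro x
      rw [AlgEquiv.eq_symm_apply]
      exact DFunLike.congr_fun hcomp x
    rw [show ⇑(φ.toLinearMap.lTensor K') = _ from funext h]
    exact s.symm.bijective.comp (AlgEquiv.bijective _)
  rw [Module.FaithfullyFlat.lTensor_bijective_iff_bijective] at hbij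
  exact ⟨(AlgEquiv.ofBijective φ hbij).symm⟩

end Forms

/-! ### Reduction of the fibres to the field case -/

section Fibres

universe u

/-- A compositum of `L` and `κ` that is Galois over `κ`: the splitting field over `κ` of the
minimal polynomial of a primitive element of `L / k`. -/
lemma exists_galois_compositum {k L : Type*} {κ : Type u} [Field k] [Field L] [Field κ]
    [Algebra k L] [FiniteDimensional k L] [Algebra.IsSeparable k L] [Algebra k κ] :
    ∃ (K' : Type u) (_ : Field K') (_ : Algebra κ K') (_ : FiniteDimensional κ K')
      (_ : IsGalois κ K') (j : L →+* K'),
      j.comp (algebraMap k L) = (algebraMap κ K').comp (algebraMap k κ) := by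
  let pb := Field.powerBasisOfFiniteOfSeparable k L
  let f := (minpoly k pb.gen).map (algebraMap k κ)
  have hsep : f.Separable :=
    Polynomial.Separable.map (Algebra.IsSeparable.isSeparable k pb.gen)
  have hdeg : f.degree ≠ 0 := by
    rw [Polynomial.degree_map]
    exact (minpoly.degree_pos pb.isIntegral_gen).ne'
  have hsplit := Polynomial.SplittingField.splits f
  obtain ⟨y, hy⟩ := hsplit.exists_eval_eq_zero (by rwa [Polynomial.degree_map])
  let : Algebra k f.SplittingField :=
    ((algebraMap κ f.SplittingField).comp (algebraMap k κ)).toAlgebra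
  have hy' : Polynomial.aeval y (minpoly k pb.gen) = 0 := by
    rw [Polynomial.eval_map, Polynomial.eval₂_map] at hy
    exact hy
  exact ⟨f.SplittingField, inferInstance, inferInstance, inferInstance,
    IsGalois.of_separable_splitting_field hsep, (pb.lift y hy').toRingHom,
    RingHom.ext fun a => (pb.lift y hy').commutes a⟩

/-- If `A` is a polynomial ring in two variables after extension of scalars from `k` to `L`, then so
are its fibres over all fields `κ` over `R`, without any extension. -/
theorem nonempty_algEquiv_fibre {k R A L κ : Type*} [Field k] [CommRing R] [Algebra k R]
    [CommRing A] [Algebra R A] [Field L] [Algebra k L] [FiniteDimensional k L]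
    [Algebra.IsSeparable k L]
    (e : ((R ⊗[k] L) ⊗[R] A) ≃ₐ[R ⊗[k] L] MvPolynomial (Fin 2) (R ⊗[k] L))
    [Field κ] [Algebra R κ] :
    Nonempty ((κ ⊗[R] A) ≃ₐ[κ] MvPolynomial (Fin 2) κ) := by
  let : Algebra k κ := ((algebraMap R κ).comp (algebraMap k R)).toAlgebra
  obtain ⟨K', _, _, _, _, j, hj⟩ := exists_galois_compositum (k := k) (L := L) (κ := κ)
  let : Algebra R K' := ((algebraMap κ K').comp (algebraMap R κ)).toAlgebra
  have : IsScalarTower R κ K' := IsScalarTower.of_algebraMap_eq fun _ => rfl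
  let : Algebra k K' := ((algebraMap R K').comp (algebraMap k R)).toAlgebra
  have : IsScalarTower k R K' := IsScalarTower.of_algebraMap_eq fun _ => rfl
  let jk : L →ₐ[k] K' := { j with commutes' := fun a => DFunLike.congr_fun hj a }
  let g : R ⊗[k] L →ₐ[R] K' :=
    Algebra.TensorProduct.lift (Algebra.ofId R K') jk fun _ _ => Commute.all _ _
  let : Algebra (R ⊗[k] L) K' := g.toRingHom.toAlgebra
  have : IsScalarTower R (R ⊗[k] L) K' :=
    IsScalarTower.of_algebraMap_eq fun r => (g.commutes r).symm
  let e₁ : K' ⊗[κ] (κ ⊗[R] A) ≃ₐ[K'] K' ⊗[R] A :=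
    Algebra.TensorProduct.cancelBaseChange R κ K' K' A
  let e₂ : K' ⊗[R ⊗[k] L] ((R ⊗[k] L) ⊗[R] A) ≃ₐ[K'] K' ⊗[R] A :=
    Algebra.TensorProduct.cancelBaseChange R (R ⊗[k] L) K' K' A
  let e₃ : K' ⊗[R ⊗[k] L] ((R ⊗[k] L) ⊗[R] A) ≃ₐ[K']
      K' ⊗[R ⊗[k] L] MvPolynomial (Fin 2) (R ⊗[k] L) :=
    Algebra.TensorProduct.congr AlgEquiv.refl e
  let e₄ : K' ⊗[R ⊗[k] L] MvPolynomial (Fin 2) (R ⊗[k] L) ≃ₐ[K'] MvPolynomial (Fin 2) K' :=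
    algebraTensorAlgEquiv (R ⊗[k] L) K'
  exact nonempty_algEquiv_of_galois (((e₁.trans e₂.symm).trans e₃).trans e₄)

/-- Descent along the free, hence faithfully flat, extension `R → R ⊗ L`. -/
lemma finiteType_and_flat {k R A L : Type*} [Field k] [CommRing R] [Algebra k R]
    [CommRing A] [Algebra R A] [Field L] [Algebra k L]
    (e : ((R ⊗[k] L) ⊗[R] A) ≃ₐ[R ⊗[k] L] MvPolynomial (Fin 2) (R ⊗[k] L)) :
    Algebra.FiniteType R A ∧ Module.Flat R A := by
  have : Algebra.FiniteType (R ⊗[k] L) ((R ⊗[k] L) ⊗[R] A) :=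
    Algebra.FiniteType.equiv inferInstance e.symm
  have : Module.Flat (R ⊗[k] L) ((R ⊗[k] L) ⊗[R] A) :=
    Module.Flat.of_linearEquiv e.toLinearEquiv
  exact ⟨Algebra.FiniteType.of_finiteType_tensorProduct_of_faithfullyFlat (R ⊗[k] L),
    Module.Flat.of_flat_tensorProduct R A (R ⊗[k] L)⟩

end Fibres

end A2Form

/-- Let `k` be a field, `R` a Dedekind domain containing `k`, and `A` an `R`-algebra.
Suppose `L` is a finite separable field extension of `k` such that `A ⊗_k L` is a
polynomial ring in two variables over `R ⊗_k L`.  Then every fiber `A ⊗_R κ(p)` is a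
polynomial ring in two variables over `κ(p)`; consequently `A` is an `𝔸²`-fibration
over `R`. -/
theorem stmt11 (k : Type*) [Field k]
    (R : Type*) [CommRing R] [IsDomain R] [IsDedekindDomain R] [Algebra k R]
    (A : Type*) [CommRing A] [Algebra R A]
    (L : Type*) [Field L] [Algebra k L] [FiniteDimensional k L] [Algebra.IsSeparable k L]
    (h : Nonempty (((R ⊗[k] L) ⊗[R] A) ≃ₐ[R ⊗[k] L] MvPolynomial (Fin 2) (R ⊗[k] L))) :
    (∀ (p : Ideal R) [p.IsPrime],
      Nonempty ((ResidueFieldAt p ⊗[R] A) ≃ₐ[ResidueFieldAt p]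
        MvPolynomial (Fin 2) (ResidueFieldAt p))) ∧
    IsA2Fibration R A := by
  obtain ⟨e⟩ := h
  have hfib : ∀ (p : Ideal R) [p.IsPrime],
      Nonempty ((ResidueFieldAt p ⊗[R] A) ≃ₐ[ResidueFieldAt p]
        MvPolynomial (Fin 2) (ResidueFieldAt p)) :=
    fun p _ => A2Form.nonempty_algEquiv_fibre e
  obtain ⟨hft, hflat⟩ := A2Form.finiteType_and_flat e
  exact ⟨hfib, hft, hflat, hfib⟩
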